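/- arXiv:1311.2821 — 8 statements merged into one kernel-verified Lean document; each statement's English description precedes it below -/
import Mathlib

section
/- Let X be a totally disconnected, metrizable, compact topological space and R a ring. Then every finitely generated left ideal J of the ring C(X,R) of locally constant functions from X to R has the following form: there exist a finite partition of X into clopen sets U₁, …, U_n and finitely generated left ideals I₁, …, I_n of R such that J = { f ∈ C(X,R) : for every j and every x ∈ U_j, f(x) ∈ I_j }. -/
/-!
Let `g₁, …, g_k` generate `J`, and combine them into one locally constant map
`G = (g₁, …, g_k) : X → R ^ k`. By compactness `G` has finitely many values; its fibres are the
clopen partition, and to the fibre over `v` one attaches the left ideal of `R` generated by the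
entries of `v`. The claim then says that membership in `J` can be tested pointwise
(`mem_span_range_iff_forall_apply`): for the nontrivial direction, coefficients expressing `f x` in
terms of the `g_i x` can be chosen as a function of the pair `(f x, G x)` alone, so they are
locally constant in `x`.
-/

namespace LocallyConstant

variable {X R : Type*} [TopologicalSpace X] [Ring R]

theorem sum_smul_apply {k : ℕ} (c g : Fin k → LocallyConstant X R) (x : X) :
    (∑ i, c i • g i) x = ∑ i, c i x * g i x :=
  map_sum (evalRingHom (Y := R) x) (fun i => c i • g i) Finset.univ

/-- Membership in a finitely generated left ideal of `C(X, R)` is a pointwise condition. -/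
theorem mem_span_range_iff_forall_apply {k : ℕ} (g : Fin k → LocallyConstant X R)
    (f : LocallyConstant X R) :
    f ∈ Submodule.span (LocallyConstant X R) (Set.range g) ↔
      ∀ x, f x ∈ Submodule.span R (Set.range fun i => g i x) := by
  constructor
  · intro hf x
    obtain ⟨c, rfl⟩ := (Submodule.mem_span_range_iff_exists_fun _).1 hf
    refine (Submodule.mem_span_range_iff_exists_fun _).2 ⟨fun i => c i x, ?_⟩
    exact (sum_smul_apply c g x).symm
  · intro hf
    -- A choice of coefficients depending only on the value `p.1` and the generators `p.2`.
    have hc : ∀ p : R × (Fin k → R), ∃ c : Fin k → R,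
        p.1 ∈ Submodule.span R (Set.range p.2) → ∑ i, c i * p.2 i = p.1 := by
      intro p
      by_cases hp : p.1 ∈ Submodule.span R (Set.range p.2)
      · obtain ⟨c, hc⟩ := (Submodule.mem_span_range_iff_exists_fun _).1 hp
        exact ⟨c, fun _ => by simpa only [smul_eq_mul] using hc⟩
      · exact ⟨0, fun h => absurd h hp⟩
    choose c hc using hc
    let H : LocallyConstant X (R × (Fin k → R)) :=
      ⟨fun x => (f x, fun i => g i x), f.isLocallyConstant.prodMk (unflip g).isLocallyConstant⟩
    refine (Submodule.mem_span_range_iff_exists_fun _).2 ⟨fun i => H.map fun p => c p i, ?_⟩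
    ext x
    rw [sum_smul_apply]
    exact hc (f x, fun i => g i x) (hf x)

end LocallyConstant

/-- Every finitely generated left ideal of `C(X,R)`, for `X` a totally disconnected
metrizable compact space, is of the form `⨁_j C(U_j, I_j)` for a finite clopen partition
`U₁, …, U_n` of `X` and finitely generated left ideals `I₁, …, I_n` of `R`. -/
theorem fg_leftIdeal_locallyConstant_eq
    {X R : Type*} [TopologicalSpace X] [CompactSpace X] [TotallyDisconnectedSpace X]
    [TopologicalSpace.MetrizableSpace X] [Ring R]
    (J : Submodule (LocallyConstant X R) (LocallyConstant X R)) (hJ : J.FG) :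
    ∃ (n : ℕ) (U : Fin n → Set X) (I : Fin n → Submodule R R),
      (∀ j, IsClopen (U j)) ∧
      (Pairwise fun j j' => Disjoint (U j) (U j')) ∧
      (⋃ j, U j) = Set.univ ∧
      (∀ j, (I j).FG) ∧
      ∀ f : LocallyConstant X R, f ∈ J ↔ ∀ (j : Fin n), ∀ x ∈ U j, f x ∈ I j := by
  obtain ⟨k, g, rfl⟩ := Submodule.fg_iff_exists_fin_generating_family.1 hJ
  let G : LocallyConstant X (Fin k → R) := LocallyConstant.unflip g
  have : Finite (Set.range G) := G.range_finite
  let e := (Finite.equivFin (Set.range G)).symm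
  have he : ∀ x, ∃ j, G x = e j := fun x =>
    ⟨e.symm ⟨G x, x, rfl⟩, by rw [Equiv.apply_symm_apply]⟩
  refine ⟨Nat.card (Set.range G), fun j => {x | G x = e j},
    fun j => Submodule.span R (Set.range (e j : Fin k → R)),
    fun j => G.isLocallyConstant.isClopen_fiber _, ?_, ?_, ?_, ?_⟩
  · intro j j' hne
    refine Set.disjoint_left.2 fun x hx hx' => hne (e.injective (Subtype.ext ?_))
    exact (show G x = e j from hx).symm.trans hx'
  · exact Set.eq_univ_of_forall fun x => Set.mem_iUnion.2 (he x)
  · exact fun j => Submodule.fg_span (Set.finite_range _)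
  · intro f
    rw [LocallyConstant.mem_span_range_iff_forall_apply]
    constructor
    · intro hf j x hx
      change f x ∈ Submodule.span R (Set.range (e j : Fin k → R))
      rw [← show G x = e j from hx]
      exact hf x
    · intro hf x
      obtain ⟨j, hj⟩ := he x
      have h : f x ∈ Submodule.span R (Set.range (e j : Fin k → R)) := hf j x hj
      rw [← hj] at h
      exact h
end

section
/- Let X be a totally disconnected, metrizable, compact topological space and R a ring such that every finitely generated left ideal of R is projective as a left R-module (i.e., R is left semihereditary). Then every finitely generated left ideal of the ring C(X,R) of locally constant functions from X to R is projective as a left C(X,R)-module; that is, C(X,R) is left semihereditary. -/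
/-!
The left ideal spanned by `v₁, …, vₙ` in a ring `S` is projective exactly when the surjection
`Sⁿ → (v₁, …, vₙ)` splits, and a splitting amounts to a matrix `e` over `S` such that
`∑ j, e i j * v j = v i` for all `i`, and such that every relation `∑ i, a i * v i = 0` forces
`∑ i, a i * e i j = 0` for all `j` (`projective_span_iff`).

Both conditions on `e` can be checked pointwise in a ring of functions. Given generators
`f₁, …, fₙ` of a left ideal of `C(X, R)`, choose such a matrix `e v` over `R` once and for all for
every tuple `v ∈ Rⁿ`. The matrix `x ↦ e (f₁ x, …, fₙ x)` factors through the locally constant map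
`x ↦ (f₁ x, …, fₙ x)`, so it is locally constant, and it splits the surjection over `C(X, R)`.
-/

/-- A finitely generated left ideal is projective iff the surjection onto it given by a tuple of
generators `v` splits; the matrix `e` is that of the splitting, with `i`-th row the image
of `v i`. -/
theorem projective_span_iff {S : Type*} [Ring S] {n : ℕ} (v : Fin n → S) :
    Module.Projective S (Submodule.span S (Set.range v)) ↔
      ∃ e : Fin n → Fin n → S, (∀ i, ∑ j, e i j * v j = v i) ∧
        ∀ a : Fin n → S, ∑ i, a i * v i = 0 → ∀ j, ∑ i, a i * e i j = 0 := by
  rw [← Fintype.range_linearCombination S v]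
  set π : (Fin n → S) →ₗ[S] S := Fintype.linearCombination S v with hπ
  have π_apply (a : Fin n → S) : π a = ∑ i, a i * v i := by
    simp [hπ, Fintype.linearCombination_apply]
  have π_single (i : Fin n) : π (Pi.single i 1) = v i := by
    simp [hπ, Fintype.linearCombination_apply_single]
  constructor
  · intro h
    obtain ⟨s, hs⟩ := Module.projective_lifting_property π.rangeRestrict LinearMap.id
      π.surjective_rangeRestrict
    refine ⟨fun i => s (π.rangeRestrict (Pi.single i 1)), fun i => ?_, fun a ha j => ?_⟩
    · have := congrArg Subtype.val (LinearMap.congr_fun hs (π.rangeRestrict (Pi.single i 1)))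
      rw [← π_apply]
      simpa [π_single] using this
    · have h0 : π.rangeRestrict a = 0 := Subtype.ext (by simpa [π_apply] using ha)
      have h1 : a = ∑ i, a i • (Pi.single i 1 : Fin n → S) := pi_eq_sum_univ' a
      have h2 : s (π.rangeRestrict a) j = 0 := by rw [h0]; simp
      rw [h1] at h2
      simpa only [map_sum, map_smul, Finset.sum_apply, Pi.smul_apply, smul_eq_mul] using h2
  · rintro ⟨e, he, hrel⟩
    set E : (Fin n → S) →ₗ[S] (Fin n → S) := Fintype.linearCombination S e with hE
    have E_apply (a : Fin n → S) (j : Fin n) : E a j = ∑ i, a i * e i j := by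
      simp [hE, Fintype.linearCombination_apply]
    have hker : LinearMap.ker π ≤ LinearMap.ker E := fun a ha => by
      rw [LinearMap.mem_ker, π_apply] at ha
      rw [LinearMap.mem_ker]
      ext j
      rw [E_apply, hrel a ha j, Pi.zero_apply]
    have hcomp : π ∘ₗ E = π := by
      ext i
      have : E (Pi.single i 1) = e i := by simp [hE, Fintype.linearCombination_apply_single]
      simp only [LinearMap.comp_apply, LinearMap.single_apply, this, π_single]
      rw [π_apply, he]
    -- `E` kills the kernel of `π`, hence descends to a section of `π` over its range.
    refine Module.Projective.of_split
      ((LinearMap.ker π).liftQ E hker ∘ₗ π.quotKerEquivRange.symm.toLinearMap)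
      π.rangeRestrict ?_
    ext ⟨_, a, rfl⟩
    have : π.quotKerEquivRange.symm ⟨π a, LinearMap.mem_range_self π a⟩ =
        (LinearMap.ker π).mkQ a := π.quotKerEquivRange_symm_apply_image a _
    simpa [this] using LinearMap.congr_fun hcomp a

/-- If `R` is left semihereditary (every finitely generated left ideal is projective),
and `X` is a totally disconnected metrizable compact space, then the ring `C(X,R)` of
locally constant functions is left semihereditary. -/
theorem locallyConstant_semihereditary
    {X R : Type*} [TopologicalSpace X] [CompactSpace X] [TotallyDisconnectedSpace X]
    [TopologicalSpace.MetrizableSpace X] [Ring R]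
    (hR : ∀ I : Submodule R R, I.FG → Module.Projective R I) :
    ∀ J : Submodule (LocallyConstant X R) (LocallyConstant X R),
      J.FG → Module.Projective (LocallyConstant X R) J := by
  intro J hJ
  obtain ⟨n, f, rfl⟩ := Submodule.fg_iff_exists_fin_generating_family.mp hJ
  have hspan (v : Fin n → R) := (projective_span_iff v).mp
    (hR _ (Submodule.fg_span (Set.finite_range v)))
  choose e he hrel using hspan
  have sum_coe (g : Fin n → LocallyConstant X R) (x : X) : (∑ i, g i) x = ∑ i, g i x :=
    map_sum (LocallyConstant.evalAddMonoidHom x) g Finset.univ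
  have hF : IsLocallyConstant fun x i => f i x := by
    rw [IsLocallyConstant.iff_eventually_eq]
    intro x
    filter_upwards [Filter.eventually_all.mpr fun i =>
      (IsLocallyConstant.iff_eventually_eq _).mp (f i).isLocallyConstant x] with y hy
    exact funext hy
  refine (projective_span_iff f).mpr
    ⟨fun i j => ⟨fun x => e (fun k => f k x) i j, hF.comp fun v => e v i j⟩, fun i => ?_,
      fun a ha j => ?_⟩
  · ext x
    simpa [sum_coe] using he (fun k => f k x) i
  · ext x
    have hx := DFunLike.congr_fun ha x
    simp only [sum_coe, LocallyConstant.mul_apply, LocallyConstant.zero_apply] at hx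
    simpa [sum_coe] using hrel (fun k => f k x) (fun i => a i x) hx j
end

section
/- Let R be a ring such that every finitely generated left ideal of R is projective as a left R-module (i.e., R is left semihereditary), and let X be a totally disconnected, metrizable, compact topological space. Then every projective left C(X,R)-module M is isomorphic, as a C(X,R)-module, to a direct sum ⨁_{i∈ι} C(U_i, I_i), where each U_i is a clopen subset of X, each I_i is a finitely generated left ideal of R, and C(U_i,I_i) denotes the C(X,R)-submodule of C(X,R) consisting of locally constant functions that vanish outside U_i and take all their values in I_i. -/
/-!
Write `A = C(X,R)`.

*`A` is left semihereditary.* Let `J` be generated by `g₁, …, gₙ`, and let `F : X → Rⁿ` be the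
locally constant map they define. For every `v ∈ Rⁿ` the map `Rⁿ → span v` has a section because
`R` is semihereditary. Applying at `x` the section chosen for `v = F x` gives a section of
`Aⁿ → J`, so `J` is projective. This also shows that `f ∈ J` exactly when `f x ∈ span (F x)` for
every `x`. Since `X` is compact, `F` has finitely many fibres, and cutting along them gives
`J = ⨁ C(U, span v)`, where `v` runs over the values of `F` and `U` is the fibre over `v`
(`LocallyConstant.exists_pointwise_of_fg`, `LocallyConstant.exists_linearEquiv_directSum_of_fg`).

*Over a left semihereditary ring `A`, every projective module `M` is a direct sum of copies of
finitely generated left ideals* (`exists_isFGIdealDecomp_top`). Let `i : M → A^(S)` be a section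
of `p : A^(S) → M`, and for `T ⊆ S` let `M_T` consist of the `m` with `i m` supported in `T`.
By Zorn's lemma there is a maximal pair of a set `T` stable under `i ∘ p` and a decomposition
of `M_T`. If `T ≠ S`, enlarge `T` by a countable stable set, one element `c` at a time.
At each stage `M_{T ∪ G}` is the kernel of the `c`-th coordinate map on `M_{T ∪ G ∪ {c}}`, where
`G` is finite. The image of that map is finitely generated (`fg_map_coord`): it is already
the image of the module of those `y ∈ A^(G ∪ {c})` for which `i (p y)` is supported in
`T ∪ G ∪ {c}`, and this module is cut out of a finitely generated one by finitely many linear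
forms. So the image is projective and splits off as one new summand. The union of the stages
contradicts maximality.
-/

universe v

/-- `C(U,I)`: the left ideal (submodule) of `C(X,R)` consisting of the locally constant
functions vanishing outside `U` and taking all their values in the left ideal `I` of `R`. -/
def LocallyConstant.idealSubmodule {X R : Type*} [TopologicalSpace X] [Ring R]
    (U : Set X) (I : Submodule R R) :
    Submodule (LocallyConstant X R) (LocallyConstant X R) where
  carrier := {f | (∀ x ∉ U, f x = 0) ∧ ∀ x, f x ∈ I}
  add_mem' := by
    intro f g hf hg
    refine ⟨fun x hx => ?_, fun x => ?_⟩
    · show f x + g x = 0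
      rw [hf.1 x hx, hg.1 x hx, add_zero]
    · exact I.add_mem (hf.2 x) (hg.2 x)
  zero_mem' := ⟨fun x _ => rfl, fun _ => I.zero_mem⟩
  smul_mem' := by
    intro c f hf
    rw [smul_eq_mul]
    refine ⟨fun x hx => ?_, fun x => ?_⟩
    · rw [LocallyConstant.mul_apply, hf.1 x hx, mul_zero]
    · rw [LocallyConstant.mul_apply]
      exact I.smul_mem (c x) (hf.2 x)

/-! ### Projective modules over left semihereditary rings -/

/-- Over a left semihereditary ring, a finitely generated image `φ P` in the ring splits off
from `P`. -/
lemma exists_split_of_fg_map {A M : Type*} [Ring A] [AddCommGroup M] [Module A M]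
    (hA : ∀ J : Submodule A A, J.FG → Module.Projective A J)
    (P : Submodule A M) (φ : M →ₗ[A] A) (hJ : (P.map φ).FG) :
    ∃ s : P.map φ →ₗ[A] M, (∀ a, s a ∈ P) ∧ ∀ a, φ (s a) = a := by
  have := hA _ hJ
  obtain ⟨s, hs⟩ := Module.projective_lifting_property
    (φ.submoduleMap P) LinearMap.id (φ.submoduleMap_surjective P)
  refine ⟨P.subtype ∘ₗ s, fun a => (s a).2, fun a => ?_⟩
  exact congrArg Subtype.val (LinearMap.congr_fun hs a)

lemma fg_inf_ker {A M : Type*} [Ring A] [AddCommGroup M] [Module A M]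
    (hA : ∀ J : Submodule A A, J.FG → Module.Projective A J)
    (P : Submodule A M) (hP : P.FG) (φ : M →ₗ[A] A) : (P ⊓ LinearMap.ker φ).FG := by
  obtain ⟨s, hsP, hs⟩ := exists_split_of_fg_map hA P φ (hP.map φ)
  -- the projection `x ↦ x - s (φ x)` maps `P` onto `P ⊓ ker φ`
  let π : P →ₗ[A] M := P.subtype - s ∘ₗ φ.submoduleMap P
  have hπ : P ⊓ LinearMap.ker φ = LinearMap.range π := by
    ext x
    constructor
    · rintro ⟨hx, hx0⟩
      refine ⟨⟨x, hx⟩, ?_⟩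
      have : φ.submoduleMap P ⟨x, hx⟩ = 0 := Subtype.ext hx0
      simp [π, this]
    · rintro ⟨y, rfl⟩
      refine ⟨P.sub_mem y.2 (hsP _), ?_⟩
      simp [π, hs]
  have : Module.Finite A P := Module.Finite.iff_fg.2 hP
  rw [hπ, LinearMap.range_eq_map]
  exact Module.Finite.fg_top.map π

lemma fg_inf_iInf_ker {A M : Type*} [Ring A] [AddCommGroup M] [Module A M]
    (hA : ∀ J : Submodule A A, J.FG → Module.Projective A J)
    (P : Submodule A M) (hP : P.FG) {κ : Type*} (φ : κ → M →ₗ[A] A) (B : Finset κ) :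
    (P ⊓ ⨅ b ∈ B, LinearMap.ker (φ b)).FG := by
  classical
  induction B using Finset.induction_on with
  | empty => simpa using hP
  | insert b B _ ih =>
    rw [Finset.iInf_insert, inf_comm (LinearMap.ker (φ b)), ← inf_assoc]
    exact fg_inf_ker hA _ ih (φ b)

/-- `𝒟` is an internal direct sum decomposition of the submodule `N` into submodules that are
isomorphic to finitely generated left ideals. -/
def IsFGIdealDecomp {A M : Type*} [Ring A] [AddCommGroup M] [Module A M]
    (𝒟 : Set (Submodule A M)) (N : Submodule A M) : Prop :=
  sSupIndep 𝒟 ∧ sSup 𝒟 = N ∧ ∀ D ∈ 𝒟, ∃ J : Submodule A A, J.FG ∧ Nonempty (D ≃ₗ[A] J)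

lemma sSupIndep_insert_of_disjoint {α : Type*} [CompleteLattice α] [IsModularLattice α]
    {s : Set α} {a : α} (hs : sSupIndep s) (ha : Disjoint a (sSup s)) : sSupIndep (insert a s) := by
  intro b hb
  by_cases hba : b = a
  · subst hba
    exact ha.mono_right (sSup_le_sSup (by intro x hx; exact hx.1.resolve_left hx.2))
  · have hbs : b ∈ s := hb.resolve_left hba
    have h1 : Disjoint b (sSup (s \ {b}) ⊔ a) := by
      refine (hs hbs).disjoint_sup_right_of_disjoint_sup_left (ha.symm.mono_left ?_)
      exact sup_le (le_sSup hbs) (sSup_le_sSup Set.sdiff_subset)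
    refine h1.mono_right (sSup_le ?_)
    rintro x ⟨rfl | hx, hxb⟩
    · exact le_sup_right
    · exact le_sup_of_le_left (le_sSup ⟨hx, hxb⟩)

/-- A decomposition of the kernel of `φ` on `P` extends to one of `P` as soon as the image
`φ P` is finitely generated: the image splits off and contributes a single new summand. -/
lemma IsFGIdealDecomp.exists_extend {A M : Type*} [Ring A] [AddCommGroup M] [Module A M]
    (hA : ∀ J : Submodule A A, J.FG → Module.Projective A J)
    {𝒟 : Set (Submodule A M)} {P : Submodule A M} (φ : M →ₗ[A] A) (hJ : (P.map φ).FG)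
    (h𝒟 : IsFGIdealDecomp 𝒟 (P ⊓ LinearMap.ker φ)) :
    ∃ 𝒟', 𝒟 ⊆ 𝒟' ∧ IsFGIdealDecomp 𝒟' P := by
  obtain ⟨s, hsP, hs⟩ := exists_split_of_fg_map hA P φ hJ
  obtain ⟨hind, hsup, hgood⟩ := h𝒟
  have hinj : Function.Injective s := fun a b hab => Subtype.ext (by rw [← hs a, hab, hs b])
  refine ⟨insert (LinearMap.range s) 𝒟, Set.subset_insert _ _, ?_, ?_, ?_⟩
  · refine sSupIndep_insert_of_disjoint hind ?_
    rw [hsup, Submodule.disjoint_def]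
    rintro _ ⟨a, rfl⟩ ⟨_, ha⟩
    have : a = 0 := Subtype.ext (by rw [← hs a]; exact ha)
    simp [this]
  · rw [sSup_insert, hsup]
    apply le_antisymm
    · refine sup_le ?_ inf_le_left
      rintro _ ⟨a, rfl⟩
      exact hsP a
    · intro x hx
      refine Submodule.mem_sup.2 ⟨s ⟨φ x, Submodule.mem_map_of_mem hx⟩, ⟨_, rfl⟩,
        x - s ⟨φ x, Submodule.mem_map_of_mem hx⟩, ⟨P.sub_mem hx (hsP _), ?_⟩, by simp⟩
      simp [hs]
  · rintro D (rfl | hD)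
    · exact ⟨_, hJ, ⟨(LinearEquiv.ofInjective s hinj).symm⟩⟩
    · exact hgood D hD

/-- Let `i : M → A^(S)` be a section of `p`. If `T` is stable under the idempotent `i ∘ p`
and `G` is finite, then for `c ∉ T` the `c`-th coordinates of the elements of `M` supported in
`T ∪ G` form a finitely generated left ideal. -/
lemma fg_map_coord {A M S : Type*} [Ring A] [AddCommGroup M] [Module A M]
    (hA : ∀ J : Submodule A A, J.FG → Module.Projective A J)
    (i : M →ₗ[A] S →₀ A) (p : (S →₀ A) →ₗ[A] M) (hp : ∀ m, p (i m) = m)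
    (T : Set S) (hT : ∀ y ∈ Finsupp.supported A A T, i (p y) ∈ Finsupp.supported A A T)
    (G : Set S) (hG : G.Finite) (c : S) (hcT : c ∉ T) :
    (((Finsupp.supported A A (T ∪ G)).comap i).map (Finsupp.lapply c ∘ₗ i)).FG := by
  classical
  -- the coordinates outside `T ∪ G` that occur in `i (p y)` for `y` supported in `G`
  let B : Finset S := (hG.toFinset.biUnion fun g => (i (p (Finsupp.single g 1))).support).filter
    fun b => b ∉ T ∪ G
  let Y : Submodule A (S →₀ A) := Finsupp.supported A A G ⊓
    ⨅ b ∈ B, LinearMap.ker (Finsupp.lapply b ∘ₗ i ∘ₗ p)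
  have hGfg : (Finsupp.supported A A G).FG := by
    rw [Finsupp.supported_eq_span_single]
    exact Submodule.fg_span (hG.image _)
  have hYfg : Y.FG := fg_inf_iInf_ker hA _ hGfg _ B
  have hB : ∀ y ∈ Finsupp.supported A A G, ∀ b ∉ T ∪ G, b ∉ B → i (p y) b = 0 := by
    intro y hy b hb hbB
    have : Finsupp.supported A A G ≤ LinearMap.ker (Finsupp.lapply b ∘ₗ i ∘ₗ p) := by
      rw [Finsupp.supported_eq_span_single, Submodule.span_le]
      rintro _ ⟨g, hg, rfl⟩
      by_contra hne
      refine hbB (Finset.mem_filter.2 ⟨Finset.mem_biUnion.2 ⟨g, hG.mem_toFinset.2 hg, ?_⟩, hb⟩)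
      exact Finsupp.mem_support_iff.2 hne
    exact this hy
  have hY : ∀ y, y ∈ Y ↔ y ∈ Finsupp.supported A A G ∧ i (p y) ∈ Finsupp.supported A A (T ∪ G) := by
    intro y
    refine and_congr_right fun hy => ?_
    rw [Finsupp.mem_supported']
    simp only [SetLike.mem_coe, Submodule.mem_iInf, LinearMap.mem_ker]
    constructor
    · intro h b hb
      by_cases hbB : b ∈ B
      · exact h b hbB
      · exact hB y hy b hb hbB
    · intro h b hb
      exact h b (Finset.mem_filter.1 hb).2
  have key : ((Finsupp.supported A A (T ∪ G)).comap i).map (Finsupp.lapply c ∘ₗ i) =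
      Y.map (Finsupp.lapply c ∘ₗ i ∘ₗ p) := by
    ext a
    constructor
    · rintro ⟨m, hm, rfl⟩
      rw [SetLike.mem_coe, Submodule.mem_comap, Finsupp.supported_union, Submodule.mem_sup] at hm
      obtain ⟨x, hx, y, hy, hxy⟩ := hm
      have hm' : i m = i (p x) + i (p y) := by
        rw [← map_add, ← map_add, hxy, hp]
      refine ⟨y, (hY y).2 ⟨hy, ?_⟩, ?_⟩
      · have : i (p y) = (x + y) - i (p x) := by rw [hxy, hm']; abel
        rw [this]
        exact Submodule.sub_mem _ (Submodule.add_mem _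
          (Finsupp.supported_mono Set.subset_union_left hx)
          (Finsupp.supported_mono Set.subset_union_right hy))
          (Finsupp.supported_mono Set.subset_union_left (hT x hx))
      · have : i (p x) c = 0 := (Finsupp.mem_supported' _ _).1 (hT x hx) c hcT
        simp [hm', this]
    · rintro ⟨y, hy, rfl⟩
      exact ⟨p y, ((hY y).1 hy).2, rfl⟩
  rw [key]
  exact hYfg.map _

/-- Every `s` lies in a countable set closed under the finite-set-valued map `σ`; the set is given
as the range of a sequence. -/
lemma exists_seq_closed {S : Type*} (σ : S → Finset S) (s : S) :
    ∃ c : ℕ → S, s ∈ Set.range c ∧ ∀ n, ∀ t ∈ σ (c n), t ∈ Set.range c := by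
  let C : ℕ → Set S := fun n => Nat.rec {s} (fun _ C => ⋃ x ∈ C, (σ x : Set S)) n
  have hC : ∀ n, (C n).Countable := by
    intro n
    induction n with
    | zero => exact Set.countable_singleton s
    | succ n ih => exact ih.biUnion fun x _ => (σ x).countable_toSet
  have hs : s ∈ ⋃ n, C n := Set.mem_iUnion.2 ⟨0, rfl⟩
  obtain ⟨c, hc⟩ := (Set.countable_iUnion hC).exists_eq_range ⟨s, hs⟩
  refine ⟨c, hc ▸ hs, fun n t ht => ?_⟩
  have hn : c n ∈ ⋃ n, C n := hc ▸ Set.mem_range_self n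
  obtain ⟨k, hk⟩ := Set.mem_iUnion.1 hn
  rw [← hc]
  exact Set.mem_iUnion.2 ⟨k + 1, Set.mem_biUnion hk ht⟩

lemma IsFGIdealDecomp.iUnion {A M κ : Type*} [Ring A] [AddCommGroup M] [Module A M]
    {𝒟 : κ → Set (Submodule A M)} {N : κ → Submodule A M}
    (hdir : Directed (· ⊆ ·) 𝒟) (h : ∀ k, IsFGIdealDecomp (𝒟 k) (N k)) :
    IsFGIdealDecomp (⋃ k, 𝒟 k) (⨆ k, N k) := by
  refine ⟨sSupIndep_iUnion_of_directed hdir fun k => (h k).1, ?_, ?_⟩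
  · rw [sSup_iUnion]
    exact iSup_congr fun k => (h k).2.1
  · intro D hD
    obtain ⟨k, hk⟩ := Set.mem_iUnion.1 hD
    exact (h k).2.2 D hk

lemma iSup_comap_supported {A M S κ : Type*} [Ring A] [AddCommGroup M] [Module A M] [Nonempty κ]
    (i : M →ₗ[A] S →₀ A) (T : κ → Set S) (hT : Directed (· ⊆ ·) T) :
    ⨆ k, (Finsupp.supported A A (T k)).comap i = (Finsupp.supported A A (⋃ k, T k)).comap i := by
  apply le_antisymm
  · exact iSup_le fun k => Submodule.comap_mono (Finsupp.supported_mono (Set.subset_iUnion T k))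
  · intro m hm
    have hm' : ((i m).support : Set S) ⊆ ⋃ k, T k := hm
    obtain ⟨k, hk⟩ := hT.exists_mem_subset_of_finset_subset_biUnion hm'
    exact Submodule.mem_iSup_of_mem k hk

/-- **Albrecht's theorem**: over a left semihereditary ring, every projective left module is an
internal direct sum of submodules isomorphic to finitely generated left ideals. -/
theorem exists_isFGIdealDecomp_top {A M : Type*} [Ring A] [AddCommGroup M] [Module A M]
    (hA : ∀ J : Submodule A A, J.FG → Module.Projective A J) (hM : Module.Projective A M) :
    ∃ 𝒟 : Set (Submodule A M), IsFGIdealDecomp 𝒟 ⊤ := by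
  classical
  obtain ⟨i, hi⟩ := Module.projective_def'.1 hM
  set p : (M →₀ A) →ₗ[A] M := Finsupp.linearCombination A id with hpdef
  have hp : ∀ m, p (i m) = m := fun m => LinearMap.congr_fun hi m
  let σ : M → Finset M := fun c => (i (p (Finsupp.single c 1))).support
  let Stable : Set M → Prop := fun T => ∀ c ∈ T, (σ c : Set M) ⊆ T
  have stable_apply : ∀ T, Stable T →
      ∀ y ∈ Finsupp.supported A A T, i (p y) ∈ Finsupp.supported A A T := by
    intro T hT
    suffices Finsupp.supported A A T ≤ (Finsupp.supported A A T).comap (i ∘ₗ p) from this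
    nth_rewrite 1 [Finsupp.supported_eq_span_single]
    rw [Submodule.span_le]
    rintro _ ⟨c, hc, rfl⟩
    exact hT c hc
  let sub : Set M → Submodule A M := fun T => (Finsupp.supported A A T).comap i
  let Z : Set (Set M × Set (Submodule A M)) := {q | Stable q.1 ∧ IsFGIdealDecomp q.2 (sub q.1)}
  have hbase : (∅, ∅) ∈ Z := by
    refine ⟨fun c hc => hc.elim, sSupIndep_empty, ?_, fun D hD => hD.elim⟩
    rw [sSup_empty, eq_comm, eq_bot_iff]
    intro m hm
    have h0 : i m = 0 := by simpa [sub] using hm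
    rw [Submodule.mem_bot, ← hp m, h0, map_zero]
  have hchain : ∀ c ⊆ Z, IsChain (· ≤ ·) c → ∀ y ∈ c, ∃ ub ∈ Z, ∀ z ∈ c, z ≤ ub := by
    intro c hcZ hc y hy
    have : Nonempty c := ⟨⟨y, hy⟩⟩
    have hdir : Directed (· ≤ ·) (fun k : c => k.1) := hc.directedOn.directed_val
    have hd1 : Directed (· ⊆ ·) (fun k : c => k.1.1) := hdir.mono_comp _ fun _ _ h => h.1
    have hd2 : Directed (· ⊆ ·) (fun k : c => k.1.2) := hdir.mono_comp _ fun _ _ h => h.2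
    refine ⟨(⋃ k : c, k.1.1, ⋃ k : c, k.1.2), ⟨?_, ?_⟩, ?_⟩
    · intro t ht
      obtain ⟨k, hk⟩ := Set.mem_iUnion.1 ht
      exact ((hcZ k.2).1 t hk).trans (Set.subset_iUnion (fun k : c => k.1.1) k)
    · have := IsFGIdealDecomp.iUnion hd2 fun k => (hcZ k.2).2
      rwa [iSup_comap_supported i _ hd1] at this
    · intro z hz
      exact ⟨Set.subset_iUnion (fun k : c => k.1.1) ⟨z, hz⟩,
        Set.subset_iUnion (fun k : c => k.1.2) ⟨z, hz⟩⟩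
  obtain ⟨⟨T, 𝒟⟩, -, ⟨hTst, h𝒟⟩, hmax⟩ := zorn_le_nonempty₀ Z hchain _ hbase
  suffices hT : T = Set.univ by
    refine ⟨𝒟, ?_⟩
    have : sub Set.univ = ⊤ := by simp [sub]
    rw [← this, ← hT]
    exact h𝒟
  by_contra hT
  obtain ⟨s, hs⟩ := (Set.ne_univ_iff_exists_notMem T).1 hT
  obtain ⟨c, hsc, hc⟩ := exists_seq_closed σ s
  -- adjoin the elements of the countable stable set `range c` one at a time
  let G : ℕ → Set M := fun n => c '' Set.Iio n
  have hGs : ∀ n, G (n + 1) = insert (c n) (G n) := by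
    intro n
    simp only [G]
    rw [← Set.image_insert_eq]
    congr 1
    ext k
    simp only [Set.mem_Iio, Set.mem_insert_iff]
    omega
  have step : ∀ n 𝒟, IsFGIdealDecomp 𝒟 (sub (T ∪ G n)) →
      ∃ 𝒟', 𝒟 ⊆ 𝒟' ∧ IsFGIdealDecomp 𝒟' (sub (T ∪ G (n + 1))) := by
    intro n 𝒟 h
    by_cases hcn : c n ∈ T ∪ G n
    · refine ⟨𝒟, subset_rfl, ?_⟩
      rwa [hGs, Set.union_insert, Set.insert_eq_of_mem hcn]
    · refine IsFGIdealDecomp.exists_extend hA (Finsupp.lapply (c n) ∘ₗ i)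
        (fg_map_coord hA i p hp T (stable_apply T hTst) _ ((Set.finite_Iio _).image c) _
          fun h => hcn (Or.inl h)) ?_
      convert h using 1
      ext m
      simp only [sub, Submodule.mem_inf, Submodule.mem_comap, Finsupp.mem_supported',
        LinearMap.mem_ker, LinearMap.comp_apply, Finsupp.lapply_apply]
      rw [hGs, Set.union_insert]
      constructor
      · rintro ⟨h1, h2⟩ x hx
        by_cases hxc : x = c n
        · rw [hxc, h2]
        · exact h1 x fun h => h.elim hxc hx
      · intro h1
        exact ⟨fun x hx => h1 x fun h => hx (Or.inr h), h1 _ hcn⟩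
  choose! next hnext₁ hnext₂ using step
  let E : ℕ → Set (Submodule A M) := fun n => Nat.rec 𝒟 next n
  have hE : ∀ n, IsFGIdealDecomp (E n) (sub (T ∪ G n)) := by
    intro n
    induction n with
    | zero => simpa [E, G] using h𝒟
    | succ n ih => exact hnext₂ n _ ih
  have hEmono : Monotone E := monotone_nat_of_le_succ fun n => hnext₁ n _ (hE n)
  have hGmono : Monotone fun n => T ∪ G n := fun a b hab =>
    Set.union_subset_union_right _ (Set.image_mono (Set.Iio_subset_Iio hab))
  have hU : ⋃ n, (T ∪ G n) = T ∪ Set.range c := by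
    rw [← Set.union_iUnion]
    congr 1
    ext x
    simp only [G, Set.mem_iUnion, Set.mem_image, Set.mem_Iio, Set.mem_range]
    exact ⟨fun ⟨_, k, _, h⟩ => ⟨k, h⟩, fun ⟨k, h⟩ => ⟨k + 1, k, Nat.lt_succ_self k, h⟩⟩
  have hnew : (T ∪ Set.range c, ⋃ n, E n) ∈ Z := by
    constructor
    · rintro x (hx | ⟨n, rfl⟩)
      · exact (hTst x hx).trans Set.subset_union_left
      · exact fun t ht => Or.inr (hc n t ht)
    · have := IsFGIdealDecomp.iUnion hEmono.directed_le hE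
      rwa [iSup_comap_supported i _ hGmono.directed_le, hU] at this
  exact hs ((hmax hnew ⟨Set.subset_union_left, Set.subset_iUnion E 0⟩).1 (Or.inr hsc))

/-! ### Finitely generated left ideals of `C(X,R)` -/

lemma exists_section_span {R : Type*} [Ring R]
    (hR : ∀ I : Submodule R R, I.FG → Module.Projective R I) {n : ℕ} (v : Fin n → R) :
    ∃ σ : Submodule.span R (Set.range v) →ₗ[R] (Fin n → R), ∀ a, ∑ k, σ a k * v k = a := by
  have := hR _ (Submodule.fg_span (Set.finite_range v))
  let π : (Fin n → R) →ₗ[R] Submodule.span R (Set.range v) :=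
    (Fintype.linearCombination R v).codRestrict _ fun c => by
      rw [← Fintype.range_linearCombination R]
      exact ⟨c, rfl⟩
  have hπ : Function.Surjective π := by
    rintro ⟨a, ha⟩
    have ha' := ha
    rw [← Fintype.range_linearCombination R] at ha'
    obtain ⟨c, hc⟩ := ha'
    exact ⟨c, Subtype.ext hc⟩
  obtain ⟨σ, hσ⟩ := Module.projective_lifting_property π LinearMap.id hπ
  refine ⟨σ, fun a => ?_⟩
  have := congrArg Subtype.val (LinearMap.congr_fun hσ a)
  simpa [π, Fintype.linearCombination_apply] using this

/-- A finitely generated left ideal `J` of `C(X,R)` is given by a pointwise condition, where the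
family of left ideals of `R` varies locally constantly. It is projective, because sections of the
maps `R ^ n → span (F x)` can be chosen to depend only on `F x`, hence locally constantly. -/
lemma LocallyConstant.exists_pointwise_of_fg {X R : Type*} [TopologicalSpace X] [Ring R]
    (hR : ∀ I : Submodule R R, I.FG → Module.Projective R I)
    (J : Submodule (LocallyConstant X R) (LocallyConstant X R)) (hJ : J.FG) :
    Module.Projective (LocallyConstant X R) J ∧
    ∃ (n : ℕ) (F : LocallyConstant X (Fin n → R)),
      ∀ f, f ∈ J ↔ ∀ x, f x ∈ Submodule.span R (Set.range (F x)) := by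
  obtain ⟨n, g, rfl⟩ := Submodule.fg_iff_exists_fin_generating_family.1 hJ
  let F : LocallyConstant X (Fin n → R) := LocallyConstant.unflip g
  have hF : ∀ x k, F x k = g k x := fun _ _ => rfl
  choose σ hσ using fun v : Fin n → R => exists_section_span hR v
  have σcongr : ∀ v w a b ha hb, v = w → a = b → σ v ⟨a, ha⟩ = σ w ⟨b, hb⟩ := by
    rintro v _ a _ ha hb rfl rfl
    rfl
  have hle : ∀ f ∈ Submodule.span (LocallyConstant X R) (Set.range g),
      ∀ x, f x ∈ Submodule.span R (Set.range (F x)) := by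
    intro f hf x
    induction hf using Submodule.span_induction with
    | mem f hf =>
      obtain ⟨k, rfl⟩ := hf
      exact Submodule.subset_span ⟨k, rfl⟩
    | zero => exact Submodule.zero_mem _
    | add f h _ _ hf hh => exact Submodule.add_mem _ hf hh
    | smul a f _ hf => exact Submodule.smul_mem _ (a x) hf
  let τ : ∀ f : LocallyConstant X R, (∀ x, f x ∈ Submodule.span R (Set.range (F x))) →
      Fin n → LocallyConstant X R := fun f hf k =>
    ⟨fun x => σ (F x) ⟨f x, hf x⟩ k, by
      rw [IsLocallyConstant.iff_eventually_eq]
      intro x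
      filter_upwards [F.isLocallyConstant.eventually_eq x, f.isLocallyConstant.eventually_eq x]
        with y hy₁ hy₂
      exact congrFun (σcongr _ _ _ _ _ _ hy₁ hy₂) k⟩
  have hτ : ∀ f hf, ∑ k, τ f hf k * g k = f := by
    intro f hf
    ext x
    have := hσ (F x) ⟨f x, hf x⟩
    rw [← LocallyConstant.evalAddMonoidHom_apply, map_sum]
    exact this
  refine ⟨?_, n, F, fun f => ⟨hle f, fun hf => ?_⟩⟩
  · let i : Submodule.span (LocallyConstant X R) (Set.range g) →ₗ[LocallyConstant X R]
        (Fin n → LocallyConstant X R) :=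
      { toFun := fun f => τ f.1 (hle f.1 f.2)
        map_add' := by
          intro f h
          ext k x
          exact congrFun ((σ (F x)).map_add ⟨f.1 x, hle f.1 f.2 x⟩ ⟨h.1 x, hle h.1 h.2 x⟩) k
        map_smul' := by
          intro a f
          ext k x
          exact congrFun ((σ (F x)).map_smul (a x) ⟨f.1 x, hle f.1 f.2 x⟩) k }
    let s := (Fintype.linearCombination (LocallyConstant X R) g).codRestrict
      (Submodule.span (LocallyConstant X R) (Set.range g)) fun c => by
        rw [← Fintype.range_linearCombination (LocallyConstant X R)]
        exact ⟨c, rfl⟩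
    refine Module.Projective.of_split i s ?_
    ext1 f
    exact Subtype.ext (hτ f.1 (hle f.1 f.2))
  · rw [← hτ f hf]
    exact Submodule.sum_mem _ fun k _ =>
      Submodule.smul_mem _ (τ f hf k) (Submodule.subset_span ⟨k, rfl⟩)

/-- A finitely generated left ideal of `C(X,R)` is a finite direct sum of modules `C(U,I)`: the
sets `U` are the fibres of the locally constant map `F` describing it. -/
lemma LocallyConstant.exists_linearEquiv_directSum_of_fg {X R : Type*} [TopologicalSpace X]
    [CompactSpace X] [Ring R] (hR : ∀ I : Submodule R R, I.FG → Module.Projective R I)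
    (J : Submodule (LocallyConstant X R) (LocallyConstant X R)) (hJ : J.FG) :
    ∃ (n : ℕ) (U : Fin n → Set X) (I : Fin n → Submodule R R),
      (∀ j, IsClopen (U j)) ∧ (∀ j, (I j).FG) ∧
      Nonempty (J ≃ₗ[LocallyConstant X R]
        DirectSum (Fin n) fun j => ↥(LocallyConstant.idealSubmodule (U j) (I j))) := by
  classical
  obtain ⟨-, n, F, hF⟩ := exists_pointwise_of_fg hR J hJ
  have : Finite (Set.range F) := F.range_finite
  obtain ⟨m, ⟨e⟩⟩ := Finite.exists_equiv_fin (Set.range F)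
  let v : Fin m → Fin n → R := fun j => (e.symm j).1
  have hv : Function.Injective v := fun a b h => e.symm.injective (Subtype.ext h)
  have hvx : ∀ x, ∃ j, F x = v j := fun x => ⟨e ⟨F x, x, rfl⟩, by simp [v]⟩
  let U : Fin m → Set X := fun j => F ⁻¹' {v j}
  let I : Fin m → Submodule R R := fun j => Submodule.span R (Set.range (v j))
  have hU : ∀ j, IsClopen (U j) := fun j => F.isLocallyConstant.isClopen_fiber (v j)
  let N : Fin m → Submodule (LocallyConstant X R) (LocallyConstant X R) :=
    fun j => LocallyConstant.idealSubmodule (U j) (I j)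
  have hind : iSupIndep N := by
    intro j
    have : ⨆ (k) (_ : k ≠ j), N k ≤ LocallyConstant.idealSubmodule (U j)ᶜ ⊤ := by
      refine iSup₂_le fun k hk f hf => ⟨fun x hx => hf.1 x fun hxk => ?_, fun _ => trivial⟩
      have h1 : F x = v j := not_not.1 hx
      have h2 : F x = v k := hxk
      exact hk (hv (h2.symm.trans h1))
    refine Disjoint.mono_right this (Submodule.disjoint_def.2 fun f hf hf' => ?_)
    ext x
    by_cases hx : x ∈ U j
    · exact hf'.1 x fun h => h hx
    · exact hf.1 x hx
  have hsup : ⨆ j, N j = J := by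
    apply le_antisymm
    · refine iSup_le fun j f hf => (hF f).2 fun x => ?_
      by_cases hx : x ∈ U j
      · have hx' : F x = v j := hx
        rw [hx']
        exact hf.2 x
      · rw [hf.1 x hx]
        exact Submodule.zero_mem _
    · intro f hf
      have hsum : f = ∑ j, LocallyConstant.charFn R (hU j) * f := by
        ext x
        obtain ⟨j, hj⟩ := hvx x
        rw [← LocallyConstant.evalAddMonoidHom_apply, ← LocallyConstant.evalAddMonoidHom_apply,
          map_sum, Finset.sum_eq_single j]
        · have : x ∈ U j := hj
          simp [LocallyConstant.coe_charFn, this]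
        · intro k _ hk
          have : x ∉ U k := fun h => hk (hv ((show F x = v k from h).symm.trans hj))
          simp [LocallyConstant.coe_charFn, this]
        · simp
      rw [hsum]
      refine Submodule.sum_mem _ fun j _ => Submodule.mem_iSup_of_mem j ⟨fun x hx => ?_, fun x => ?_⟩
      · simp [LocallyConstant.coe_charFn, hx]
      · by_cases hx : x ∈ U j
        · have hx' : F x = v j := hx
          have := (hF f).1 hf x
          rw [hx'] at this
          simpa [LocallyConstant.coe_charFn, hx] using this
        · simp [LocallyConstant.coe_charFn, hx]
  refine ⟨m, U, I, hU, fun j => Submodule.fg_span (Set.finite_range _), ⟨?_⟩⟩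
  exact ((LinearEquiv.ofInjective _ hind.dfinsupp_lsum_injective).trans (LinearEquiv.ofEq _ _ (by
    rw [← Submodule.iSup_eq_range_dfinsupp_lsum, hsup]))).symm

/-- If `R` is left semihereditary and `X` is a totally disconnected metrizable compact
space, then every projective left `C(X,R)`-module is isomorphic to a direct sum of
modules of the form `C(U,I)` with `U ⊆ X` clopen and `I` a finitely generated left ideal
of `R`. -/
theorem projective_module_over_locallyConstant_iso_directSum
    {X R : Type*} [TopologicalSpace X] [CompactSpace X] [TotallyDisconnectedSpace X]
    [TopologicalSpace.MetrizableSpace X] [Ring R]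
    (hR : ∀ I : Submodule R R, I.FG → Module.Projective R I)
    (M : Type v) [AddCommGroup M] [Module (LocallyConstant X R) M]
    (hM : Module.Projective (LocallyConstant X R) M) :
    ∃ (ι : Type v) (U : ι → Set X) (I : ι → Submodule R R),
      (∀ i, IsClopen (U i)) ∧
      (∀ i, (I i).FG) ∧
      Nonempty (M ≃ₗ[LocallyConstant X R]
        DirectSum ι fun i => ↥(LocallyConstant.idealSubmodule (U i) (I i))) := by
  classical
  have hA : ∀ J : Submodule (LocallyConstant X R) (LocallyConstant X R),
      J.FG → Module.Projective (LocallyConstant X R) J :=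
    fun J hJ => (LocallyConstant.exists_pointwise_of_fg hR J hJ).1
  obtain ⟨𝒟, hind, hsup, hgood⟩ := exists_isFGIdealDecomp_top hA hM
  have hfin : ∀ D : 𝒟, ∃ (n : ℕ) (U : Fin n → Set X) (I : Fin n → Submodule R R),
      (∀ j, IsClopen (U j)) ∧ (∀ j, (I j).FG) ∧
      Nonempty (D.1 ≃ₗ[LocallyConstant X R]
        DirectSum (Fin n) fun j => ↥(LocallyConstant.idealSubmodule (U j) (I j))) := by
    rintro ⟨D, hD⟩
    obtain ⟨J, hJ, ⟨e⟩⟩ := hgood D hD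
    obtain ⟨n, U, I, hU, hI, ⟨e'⟩⟩ := LocallyConstant.exists_linearEquiv_directSum_of_fg hR J hJ
    exact ⟨n, U, I, hU, hI, ⟨e.trans e'⟩⟩
  choose n U I hU hI e using hfin
  refine ⟨Σ D : 𝒟, Fin (n D), fun q => U q.1 q.2, fun q => I q.1 q.2, fun q => hU _ _,
    fun q => hI _ _, ⟨?_⟩⟩
  have e₁ : (Π₀ D : 𝒟, D.1) ≃ₗ[LocallyConstant X R] M :=
    iSupIndep.linearEquiv ((sSupIndep_iff 𝒟).1 hind) (by rw [← hsup, sSup_eq_iSup'])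
  exact e₁.symm.trans ((DFinsupp.mapRange.linearEquiv fun D => (e D).some).trans
    (DirectSum.sigmaLcurryEquiv (LocallyConstant X R)
      (δ := fun D j => ↥(LocallyConstant.idealSubmodule (U D j) (I D j)))).symm)
end

section
/- Let X be a totally disconnected, metrizable, compact topological space. Then every countably generated projective C(X,ℤ)-module M is isomorphic, as a C(X,ℤ)-module, to a direct sum ⨁_{i∈ι} C(U_i, ℤ), where ι is a countable index set, each U_i is a clopen subset of X, and C(U_i,ℤ) denotes the C(X,ℤ)-submodule of C(X,ℤ) consisting of locally constant integer-valued functions vanishing outside U_i. -/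
/-!
Choose a surjection `π : R^(ℕ) → M` with a section `s`, where `R = C(X,ℤ)`, so that `M` is
identified with `P = ker T` for the endomorphism `T = 1 - s ∘ π` of `R^(ℕ)`. Filter `P` by the
submodules `P_n` of vectors whose coordinates of index `> n` vanish. The `n`-th coordinates of the
elements of `P_n` form an ideal `I_n`, and `P_n / P_(n-1) ≅ I_n`.

The point is that `I_n` is principal. The first `n + 1` columns of `T` are finitely many finitely
supported vectors, hence form a locally constant family of integer matrices (`isLocallyConstant_cols`),
and membership in `P_n` is tested fibrewise. For one integer matrix the last coordinates of kernel
vectors form an ideal of `ℤ`, generated by the last coordinate of some kernel vector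
(`exists_kernel_vector`). Choosing this vector as a function of the matrix gives
`w_n ∈ P_n` whose `n`-th coordinate `d_n` generates `I_n` (`exists_pivot`). With `U_n` the clopen
support of `d_n`, the map `⨁ C(U_n,ℤ) → R^(ℕ)`, `(r_n) ↦ ∑ r_n w_n`, is injective with image `P`,
because the `w_n` are triangular (`exists_embedding_range_eq_ker`).
-/

/-- `C(U,ℤ)` (more generally `C(U,R)`): the left ideal (submodule) of `C(X,R)` consisting
of the locally constant functions vanishing at every point outside `U`. -/
def LocallyConstant.vanishingIdeal {X R : Type*} [TopologicalSpace X] [Ring R] (U : Set X) :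
    Submodule (LocallyConstant X R) (LocallyConstant X R) where
  carrier := {f | ∀ x ∉ U, f x = 0}
  add_mem' := by
    intro f g hf hg x hx
    show f x + g x = 0
    rw [hf x hx, hg x hx, add_zero]
  zero_mem' := fun x _ => rfl
  smul_mem' := by
    intro c f hf x hx
    show (c * f) x = 0
    rw [LocallyConstant.mul_apply, hf x hx, mul_zero]

/-- The last coordinates of the integer relations among `n + 1` vectors form an ideal of `ℤ`,
generated by the last coordinate of one such relation `w`. -/
lemma exists_kernel_vector (n : ℕ) (c : Fin (n + 1) → ℕ → ℤ) :
    ∃ w : Fin (n + 1) → ℤ, (∀ i, ∑ j, w j * c j i = 0) ∧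
      ∀ v : Fin (n + 1) → ℤ, (∀ i, ∑ j, v j * c j i = 0) → w (Fin.last n) ∣ v (Fin.last n) := by
  let K : Submodule ℤ (Fin (n + 1) → ℤ) := LinearMap.ker (Fintype.linearCombination ℤ c)
  have hK : ∀ v, v ∈ K ↔ ∀ i, ∑ j, v j * c j i = 0 := by
    intro v
    simp [K, LinearMap.mem_ker, Fintype.linearCombination_apply, funext_iff, Finset.sum_apply]
  let J : Ideal ℤ := K.map (LinearMap.proj (Fin.last n))
  obtain ⟨g, hg⟩ := (IsPrincipalIdealRing.principal J).principal
  have hgJ : g ∈ J := by rw [hg]; exact Submodule.mem_span_singleton_self g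
  obtain ⟨w, hw, hwg⟩ := Submodule.mem_map.1 hgJ
  refine ⟨w, (hK w).1 hw, fun v hv => ?_⟩
  have hvJ : v (Fin.last n) ∈ J := Submodule.mem_map.2 ⟨v, (hK v).2 hv, rfl⟩
  rw [hg] at hvJ
  obtain ⟨a, ha⟩ := Submodule.mem_span_singleton.1 hvJ
  have hwg' : w (Fin.last n) = g := hwg
  exact ⟨a, by rw [hwg', ← ha, smul_eq_mul, mul_comm]⟩

/-- A finite family of finitely supported vectors over `C(X,ℤ)` is a locally constant family of
integer matrices. Finiteness of the supports is what makes infinitely many rows harmless. -/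
lemma isLocallyConstant_cols {X : Type*} [TopologicalSpace X] {n : ℕ}
    (f : Fin n → ℕ →₀ LocallyConstant X ℤ) :
    IsLocallyConstant (fun x => fun j i => f j i x : X → Fin n → ℕ → ℤ) := by
  rw [IsLocallyConstant.iff_eventually_eq]
  intro x
  have h : ∀ j, ∀ᶠ y in nhds x, ∀ i ∈ (f j).support, f j i y = f j i x := fun j =>
    (Filter.eventually_all_finset _).2 fun i _ =>
      (IsLocallyConstant.iff_eventually_eq _).1 (f j i).isLocallyConstant x
  filter_upwards [Filter.eventually_all.2 h] with y hy
  funext j i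
  by_cases hi : i ∈ (f j).support
  · exact hy j i hi
  · simp [Finsupp.notMem_support_iff.1 hi]

/-- The value at a point of `T v`, computed fibrewise from the columns of `T`. -/
lemma apply_eq_sum_cols {X : Type*} [TopologicalSpace X]
    (T : (ℕ →₀ LocallyConstant X ℤ) →ₗ[LocallyConstant X ℤ] (ℕ →₀ LocallyConstant X ℤ))
    (n : ℕ) (v : ℕ →₀ LocallyConstant X ℤ) (hv : ∀ j, n < j → v j = 0) (i : ℕ) (x : X) :
    T v i x = ∑ j : Fin (n + 1), v j x * T (Finsupp.single j 1) i x := by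
  have hsum : v = ∑ j ∈ Finset.range (n + 1), v j • Finsupp.single j 1 := by
    ext1 k
    simp only [Finsupp.finsetSum_apply, Finsupp.smul_apply, Finsupp.single_apply, smul_eq_mul,
      mul_ite, mul_one, mul_zero, Finset.sum_ite_eq', Finset.mem_range]
    split_ifs with h
    · rfl
    · exact hv k (by omega)
  rw [← Fin.sum_univ_eq_sum_range (fun j => v j • Finsupp.single j 1)] at hsum
  conv_lhs => rw [hsum]
  rw [map_sum, Finsupp.finsetSum_apply]
  refine (map_sum (LocallyConstant.evalRingHom (Y := ℤ) x) _ _).trans ?_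
  refine Finset.sum_congr rfl fun j _ => ?_
  rw [map_smul]
  rfl

/-- In the kernel of an endomorphism of `C(X,ℤ)^(ℕ)` there is, for each `n`, a vector `w` with no
coordinates beyond `n` whose `n`-th coordinate divides, pointwise, that of any other such vector. -/
lemma exists_pivot {X : Type*} [TopologicalSpace X]
    (T : (ℕ →₀ LocallyConstant X ℤ) →ₗ[LocallyConstant X ℤ] (ℕ →₀ LocallyConstant X ℤ))
    (n : ℕ) :
    ∃ w : ℕ →₀ LocallyConstant X ℤ, T w = 0 ∧ (∀ j, n < j → w j = 0) ∧
      ∀ v : ℕ →₀ LocallyConstant X ℤ, T v = 0 → (∀ j, n < j → v j = 0) →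
        ∀ x, w n x ∣ v n x := by
  choose W hW0 hWdvd using exists_kernel_vector n
  let A : LocallyConstant X (Fin (n + 1) → ℕ → ℤ) :=
    ⟨fun x j i => T (Finsupp.single j 1) i x,
      isLocallyConstant_cols fun j : Fin (n + 1) => T (Finsupp.single (j : ℕ) 1)⟩
  let w : ℕ →₀ LocallyConstant X ℤ :=
    Finsupp.onFinset (Finset.range (n + 1))
      (fun j => if h : j < n + 1 then A.map (fun c => W c ⟨j, h⟩) else 0)
      (fun j hj => by
        by_contra h
        exact hj (dif_neg (by simpa using h)))
  have hwn : ∀ j, n < j → w j = 0 := fun j hj => dif_neg (by omega)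
  have hw : ∀ (j : Fin (n + 1)) x, w j x = W (A x) j := by
    intro j x
    have : w j = A.map (fun c => W c j) := dif_pos j.2
    rw [this]; rfl
  refine ⟨w, ?_, hwn, ?_⟩
  · ext i x
    rw [apply_eq_sum_cols T n w hwn]
    simp only [hw]
    exact hW0 (A x) i
  · intro v hv hvn x
    have h := hWdvd (A x) (fun j => v j x) fun i => by
      have := apply_eq_sum_cols T n v hvn i x
      rw [hv] at this
      exact this.symm
    rw [← hw] at h
    exact h

/-- The map `⨁ C(U_n,ℤ) → C(X,ℤ)^(ℕ)`, `(r_n) ↦ ∑ r_n w_n`. -/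
noncomputable def combination {X : Type*} [TopologicalSpace X]
    (w : ℕ → ℕ →₀ LocallyConstant X ℤ) (U : ℕ → Set X) :
    (DirectSum ℕ fun n => ↥(LocallyConstant.vanishingIdeal (X := X) (R := ℤ) (U n)))
      →ₗ[LocallyConstant X ℤ] (ℕ →₀ LocallyConstant X ℤ) :=
  DirectSum.toModule (LocallyConstant X ℤ) ℕ (ℕ →₀ LocallyConstant X ℤ) fun n =>
    (LinearMap.toSpanSingleton (LocallyConstant X ℤ) (ℕ →₀ LocallyConstant X ℤ) (w n)) ∘ₗ
      (LocallyConstant.vanishingIdeal (X := X) (R := ℤ) (U n)).subtype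

lemma combination_of {X : Type*} [TopologicalSpace X]
    (w : ℕ → ℕ →₀ LocallyConstant X ℤ) (U : ℕ → Set X) (n : ℕ)
    (r : ↥(LocallyConstant.vanishingIdeal (X := X) (R := ℤ) (U n))) :
    combination w U (DirectSum.of _ n r) = (r : LocallyConstant X ℤ) • w n := by
  rw [combination, ← DirectSum.lof_eq_of (LocallyConstant X ℤ), DirectSum.toModule_lof]
  rfl

/-- A sequence in `C(X,ℤ)^(ℕ)` that is triangular (`w n` has no coordinates beyond `n`) is
independent over the coefficients supported where its diagonal is nonzero. -/
lemma injective_of_triangular {X : Type*} [TopologicalSpace X]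
    (w : ℕ → ℕ →₀ LocallyConstant X ℤ) (hw : ∀ n j, n < j → w n j = 0)
    (Φ : (DirectSum ℕ fun n =>
        ↥(LocallyConstant.vanishingIdeal (X := X) (R := ℤ) {x | w n n x ≠ 0}))
      →ₗ[LocallyConstant X ℤ] (ℕ →₀ LocallyConstant X ℤ))
    (hΦ : ∀ n r, Φ (DirectSum.of _ n r) = (r : LocallyConstant X ℤ) • w n) :
    Function.Injective Φ := by
  classical
  rw [injective_iff_map_eq_zero]
  intro a ha
  by_contra hne
  have hsupp : (DFinsupp.support a).Nonempty := by
    rw [Finset.nonempty_iff_ne_empty]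
    exact fun h => hne (DFinsupp.support_eq_empty.1 h)
  -- The coordinate of `Φ a` at the top index `n` of `a` only sees the diagonal entry.
  set n := (DFinsupp.support a).max' hsupp with hn
  have hmem : n ∈ DFinsupp.support a := Finset.max'_mem _ _
  have hcoord : Φ a n = (a n : LocallyConstant X ℤ) * w n n := by
    conv_lhs => rw [← DirectSum.sum_support_of a]
    rw [map_sum, Finsupp.finsetSum_apply, Finset.sum_eq_single n]
    · rw [hΦ]; rfl
    · intro k hk hkn
      have hlt : k < n := lt_of_le_of_ne (Finset.le_max' _ _ hk) hkn
      rw [hΦ, Finsupp.smul_apply, hw k n hlt, smul_zero]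
    · exact fun h => absurd hmem h
  rw [ha] at hcoord
  refine (DFinsupp.mem_support_iff.1 hmem) (Subtype.ext (LocallyConstant.ext fun x => ?_))
  by_cases hx : w n n x = 0
  · exact (a n).2 x (fun h => h hx)
  · have h := congrArg (fun f : LocallyConstant X ℤ => f x) hcoord
    have h' : 0 = (a n : LocallyConstant X ℤ) x * w n n x := h
    exact (mul_eq_zero.1 h'.symm).resolve_right hx

/-- Elimination of the top coordinate by pivots: every kernel vector is in the image of `Φ`. -/
lemma mem_range_of_pivots {X : Type*} [TopologicalSpace X]
    (T : (ℕ →₀ LocallyConstant X ℤ) →ₗ[LocallyConstant X ℤ] (ℕ →₀ LocallyConstant X ℤ))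
    (w : ℕ → ℕ →₀ LocallyConstant X ℤ) (hTw : ∀ n, T (w n) = 0)
    (hwtri : ∀ n j, n < j → w n j = 0)
    (hdvd : ∀ n (v : ℕ →₀ LocallyConstant X ℤ), T v = 0 → (∀ j, n < j → v j = 0) →
      ∀ x, w n n x ∣ v n x)
    (Φ : (DirectSum ℕ fun n =>
        ↥(LocallyConstant.vanishingIdeal (X := X) (R := ℤ) {x | w n n x ≠ 0}))
      →ₗ[LocallyConstant X ℤ] (ℕ →₀ LocallyConstant X ℤ))
    (hΦ : ∀ n r, Φ (DirectSum.of _ n r) = (r : LocallyConstant X ℤ) • w n) (N : ℕ) :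
    ∀ v : ℕ →₀ LocallyConstant X ℤ, T v = 0 → (∀ j, N ≤ j → v j = 0) → v ∈ LinearMap.range Φ := by
  induction N with
  | zero =>
    intro v _ hv
    have : v = 0 := Finsupp.ext fun j => hv j (Nat.zero_le j)
    rw [this]; exact Submodule.zero_mem _
  | succ n ih =>
    intro v hTv0 hv
    -- Integer division gives `0` where the diagonal vanishes, so `r` is supported in `U n`.
    obtain ⟨r, hr⟩ : ∃ r : LocallyConstant X ℤ, ∀ x, r x = v n x / w n n x :=
      ⟨⟨fun x => v n x / w n n x,
        (v n).isLocallyConstant.comp₂ (w n n).isLocallyConstant (· / ·)⟩, fun x => rfl⟩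
    have hrU : r ∈ LocallyConstant.vanishingIdeal (X := X) (R := ℤ) {x | w n n x ≠ 0} := by
      intro x hx
      have hx0 : w n n x = 0 := not_not.1 hx
      rw [hr, hx0, Int.ediv_zero]
    have hmem : r • w n ∈ LinearMap.range Φ := ⟨_, hΦ n ⟨r, hrU⟩⟩
    have hrest : v - r • w n ∈ LinearMap.range Φ := by
      refine ih _ (by rw [map_sub, map_smul, hTv0, hTw, smul_zero, sub_zero]) fun j hj => ?_
      rcases hj.eq_or_lt with rfl | hlt
      · ext x
        have h := Int.ediv_mul_cancel (hdvd n v hTv0 (fun j hj => hv j hj) x)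
        change v n x - r x * w n n x = 0
        rw [hr, h, sub_self]
      · rw [Finsupp.sub_apply, Finsupp.smul_apply, hv j hlt, hwtri n j hlt, smul_zero, sub_zero]
    simpa using Submodule.add_mem _ hrest hmem

lemma range_eq_ker_of_pivots {X : Type*} [TopologicalSpace X]
    (T : (ℕ →₀ LocallyConstant X ℤ) →ₗ[LocallyConstant X ℤ] (ℕ →₀ LocallyConstant X ℤ))
    (w : ℕ → ℕ →₀ LocallyConstant X ℤ) (hTw : ∀ n, T (w n) = 0)
    (hwtri : ∀ n j, n < j → w n j = 0)
    (hdvd : ∀ n (v : ℕ →₀ LocallyConstant X ℤ), T v = 0 → (∀ j, n < j → v j = 0) →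
      ∀ x, w n n x ∣ v n x)
    (Φ : (DirectSum ℕ fun n =>
        ↥(LocallyConstant.vanishingIdeal (X := X) (R := ℤ) {x | w n n x ≠ 0}))
      →ₗ[LocallyConstant X ℤ] (ℕ →₀ LocallyConstant X ℤ))
    (hΦ : ∀ n r, Φ (DirectSum.of _ n r) = (r : LocallyConstant X ℤ) • w n) :
    LinearMap.range Φ = LinearMap.ker T := by
  apply le_antisymm
  · rintro _ ⟨a, rfl⟩
    induction a using DirectSum.induction_on with
    | zero => simp
    | of n r => rw [hΦ, LinearMap.mem_ker, map_smul, hTw, smul_zero]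
    | add a b ha hb => rw [map_add]; exact Submodule.add_mem _ ha hb
  · intro v hv
    refine mem_range_of_pivots T w hTw hwtri hdvd Φ hΦ (v.support.sup id + 1) v hv fun j hj => ?_
    by_contra h
    have := Finset.le_sup (f := id) (Finsupp.mem_support_iff.2 h)
    simp only [id] at this
    omega

/-- The kernel of any endomorphism of `C(X,ℤ)^(ℕ)` is the image of an embedding of a direct sum of
modules `C(U_n,ℤ)` with `U_n` clopen. -/
lemma exists_embedding_range_eq_ker {X : Type*} [TopologicalSpace X]
    (T : (ℕ →₀ LocallyConstant X ℤ) →ₗ[LocallyConstant X ℤ] (ℕ →₀ LocallyConstant X ℤ)) :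
    ∃ U : ℕ → Set X, (∀ n, IsClopen (U n)) ∧
      ∃ Φ : (DirectSum ℕ fun n => ↥(LocallyConstant.vanishingIdeal (X := X) (R := ℤ) (U n)))
        →ₗ[LocallyConstant X ℤ] (ℕ →₀ LocallyConstant X ℤ),
        Function.Injective Φ ∧ LinearMap.range Φ = LinearMap.ker T := by
  choose w hTw hwtri hdvd using exists_pivot T
  exact ⟨fun n => {x | w n n x ≠ 0},
    fun n => (w n n).isLocallyConstant.isClopen_fiber 0 |>.compl, combination w _,
    injective_of_triangular w hwtri _ (combination_of w _),
    range_eq_ker_of_pivots T w hTw hwtri hdvd _ (combination_of w _)⟩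

/-- Every countably generated projective `C(X,ℤ)`-module, for `X` a totally disconnected
metrizable compact space, is isomorphic to a countable direct sum of modules `C(U_i,ℤ)`
with `U_i ⊆ X` clopen. -/
theorem countably_generated_projective_module_iso_directSum
    {X : Type*} [TopologicalSpace X] [CompactSpace X] [TotallyDisconnectedSpace X]
    [TopologicalSpace.MetrizableSpace X]
    (M : Type*) [AddCommGroup M] [Module (LocallyConstant X ℤ) M]
    (hproj : Module.Projective (LocallyConstant X ℤ) M)
    (hcg : ∃ S : Set M, S.Countable ∧ Submodule.span (LocallyConstant X ℤ) S = ⊤) :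
    ∃ (ι : Type) (_ : Countable ι) (U : ι → Set X),
      (∀ i, IsClopen (U i)) ∧
      Nonempty (M ≃ₗ[LocallyConstant X ℤ]
        DirectSum ι fun i => ↥(LocallyConstant.vanishingIdeal (X := X) (R := ℤ) (U i))) := by
  obtain ⟨S, hS, hspan⟩ := hcg
  obtain ⟨f, hf⟩ := (hS.insert 0).exists_eq_range ⟨0, Set.mem_insert _ _⟩
  let π := Finsupp.linearCombination (LocallyConstant X ℤ) f
  have hπ : Function.Surjective π := by
    rw [← LinearMap.range_eq_top, Finsupp.range_linearCombination, ← hf, eq_top_iff, ← hspan]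
    exact Submodule.span_mono (Set.subset_insert _ _)
  obtain ⟨s, hs⟩ := Module.projective_lifting_property π LinearMap.id hπ
  have hπs : ∀ m, π (s m) = m := fun m => LinearMap.congr_fun hs m
  let T := LinearMap.id - s ∘ₗ π
  have hTv : ∀ v, T v = v - s (π v) := fun v => rfl
  have hrange : LinearMap.range s = LinearMap.ker T := by
    ext v
    rw [LinearMap.mem_range, LinearMap.mem_ker, hTv]
    constructor
    · rintro ⟨m, rfl⟩
      rw [hπs, sub_self]
    · exact fun h => ⟨π v, (sub_eq_zero.1 h).symm⟩
  obtain ⟨U, hU, Φ, hinj, hrangeΦ⟩ := exists_embedding_range_eq_ker T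
  have hsinj : Function.Injective s := Function.LeftInverse.injective hπs
  exact ⟨ℕ, inferInstance, U, hU, ⟨(LinearEquiv.ofInjective s hsinj).trans
    ((LinearEquiv.ofEq _ _ (hrange.trans hrangeΦ.symm)).trans
      (LinearEquiv.ofInjective Φ hinj).symm)⟩⟩
end

section
/- Let R be a ring and let (M_n)_{n∈ℕ} be a sequence of projective left R-modules together with R-linear maps φ_n : M_n → M_{n+1}. Then the direct limit M = lim_{→} (M_n, φ_n) has projective dimension at most 1: there exist projective left R-modules P₀ and P₁, a surjective R-linear map π : P₀ → M, and an injective R-linear map ι : P₁ → P₀ whose range equals the kernel of π. -/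
/-!
The limit is the cokernel of the telescope map `1 - shift` on `⨁ n, M n`, which sends `x` in
degree `n` to `x` in degree `n` minus `φ n x` in degree `n + 1`. The telescope is injective because
the components of an element of its kernel vanish one after the other, starting in degree `0`. The
kernel of the canonical map to the limit is its range: modulo the range, the inclusions
of the `M n` are compatible with the transition maps, so the quotient map factors through the
limit. As `⨁ n, M n` is projective, this gives a projective resolution of length one.
-/

universe u v

/-- The transition maps `M i →ₗ[R] M j` (for `i ≤ j`) of the directed system generated by
a sequence of linear maps `φ n : M n →ₗ[R] M (n+1)`, given by composing consecutive maps. -/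
noncomputable def natLERecMap {R : Type u} [Ring R] {M : ℕ → Type v}
    [∀ n, AddCommGroup (M n)] [∀ n, Module R (M n)]
    (φ : ∀ n, M n →ₗ[R] M (n + 1)) :
    ∀ i j, i ≤ j → (M i →ₗ[R] M j) :=
  fun i _ h =>
    Nat.leRecOn (C := fun k => M i →ₗ[R] M k) h (fun {k} g => (φ k).comp g) LinearMap.id

open DirectSum

section Telescope

variable {R : Type u} [Ring R] {M : ℕ → Type v} [∀ n, AddCommGroup (M n)] [∀ n, Module R (M n)]
  (φ : ∀ n, M n →ₗ[R] M (n + 1))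

theorem natLERecMap_self (i : ℕ) : natLERecMap φ i i le_rfl = LinearMap.id :=
  Nat.leRecOn_self _

theorem natLERecMap_succ {i k : ℕ} (h : i ≤ k) :
    natLERecMap φ i (k + 1) (h.trans k.le_succ) = (φ k).comp (natLERecMap φ i k h) :=
  Nat.leRecOn_succ h _

/-- The endomorphism of `⨁ n, M n` that raises degrees by one through the maps `φ n`. -/
noncomputable def shiftMap : (⨁ n, M n) →ₗ[R] ⨁ n, M n :=
  DirectSum.toModule R ℕ _ fun n => (DirectSum.lof R ℕ M (n + 1)).comp (φ n)

/-- The endomorphism `1 - shift` of `⨁ n, M n`, whose cokernel is the direct limit. -/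
noncomputable def telescope : (⨁ n, M n) →ₗ[R] ⨁ n, M n :=
  LinearMap.id - shiftMap φ

/-- The canonical map from the direct sum to the direct limit. -/
noncomputable def sumToLimit : (⨁ n, M n) →ₗ[R] Module.DirectLimit M (natLERecMap φ) :=
  DirectSum.toModule R ℕ _ fun n => Module.DirectLimit.of R ℕ M (natLERecMap φ) n

theorem telescope_lof (n : ℕ) (x : M n) :
    telescope φ (DirectSum.lof R ℕ M n x) =
      DirectSum.lof R ℕ M n x - DirectSum.lof R ℕ M (n + 1) (φ n x) := by
  simp [telescope, shiftMap]

theorem shiftMap_of (i : ℕ) (x : M i) :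
    shiftMap φ (DirectSum.of M i x) = DirectSum.of M (i + 1) (φ i x) :=
  DirectSum.toModule_lof R i x

theorem shiftMap_apply_zero (x : ⨁ n, M n) : shiftMap φ x 0 = 0 := by
  induction x using DirectSum.induction_on with
  | zero => simp
  | of i x =>
    rw [shiftMap_of]
    exact DirectSum.of_eq_of_ne _ _ _ (by omega)
  | add x y hx hy => simp [hx, hy]

theorem shiftMap_apply_succ (x : ⨁ n, M n) (n : ℕ) : shiftMap φ x (n + 1) = φ n (x n) := by
  induction x using DirectSum.induction_on with
  | zero => simp
  | of i x =>
    rw [shiftMap_of]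
    by_cases h : n = i
    · subst h
      rw [DirectSum.of_eq_same, DirectSum.of_eq_same]
    · rw [DirectSum.of_eq_of_ne _ _ _ (by omega), DirectSum.of_eq_of_ne _ _ _ h, map_zero]
  | add x y hx hy => simp [hx, hy]

theorem telescope_injective : Function.Injective (telescope φ) := by
  rw [injective_iff_map_eq_zero]
  intro x hx
  have hx' : x = shiftMap φ x := sub_eq_zero.mp hx
  refine DFinsupp.ext fun n => ?_
  change x n = 0
  induction n with
  | zero => rw [hx', shiftMap_apply_zero]
  | succ n ih => rw [hx', shiftMap_apply_succ, ih, map_zero]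

theorem sumToLimit_surjective : Function.Surjective (sumToLimit φ) := by
  intro z
  obtain ⟨i, x, rfl⟩ := Module.DirectLimit.exists_of z
  exact ⟨DirectSum.lof R ℕ M i x, by simp [sumToLimit]⟩

theorem mkQ_lof_natLERecMap {i j : ℕ} (h : i ≤ j) (x : M i) :
    (LinearMap.range (telescope φ)).mkQ (DirectSum.lof R ℕ M j (natLERecMap φ i j h x)) =
      (LinearMap.range (telescope φ)).mkQ (DirectSum.lof R ℕ M i x) := by
  induction j, h using Nat.le_induction with
  | base => rw [natLERecMap_self, LinearMap.id_apply]
  | succ k h ih =>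
    rw [← ih, natLERecMap_succ φ h, LinearMap.comp_apply, eq_comm, ← sub_eq_zero, ← map_sub,
      ← telescope_lof]
    simp

theorem range_telescope : LinearMap.range (telescope φ) = LinearMap.ker (sumToLimit φ) := by
  apply le_antisymm
  · rw [LinearMap.range_le_ker_iff]
    ext n x
    have h : Module.DirectLimit.of R ℕ M (natLERecMap φ) (n + 1) (φ n x) =
        Module.DirectLimit.of R ℕ M (natLERecMap φ) n x := by
      rw [← Module.DirectLimit.of_f (hij := n.le_succ) (x := x), natLERecMap_succ φ le_rfl,
        natLERecMap_self, LinearMap.comp_id]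
    simp [telescope_lof, sumToLimit, h]
  · -- The quotient map by the range factors through the limit, so it kills `ker (sumToLimit φ)`.
    let q := Module.DirectLimit.lift R ℕ M (natLERecMap φ)
      (fun i => (LinearMap.range (telescope φ)).mkQ.comp (DirectSum.lof R ℕ M i))
      (fun _ _ h x => mkQ_lof_natLERecMap φ h x)
    have hq : q.comp (sumToLimit φ) = (LinearMap.range (telescope φ)).mkQ := by
      ext n x
      simp [q, sumToLimit]
    intro x hx
    rw [← Submodule.ker_mkQ (LinearMap.range (telescope φ)), ← hq, LinearMap.mem_ker,
      LinearMap.comp_apply, LinearMap.mem_ker.mp hx, map_zero]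

end Telescope

/-- The direct limit of a sequential directed system of projective modules has projective
dimension at most `1`. -/
theorem directLimit_of_projective_hasProjectiveDimensionLE_one
    {R : Type u} [Ring R] {M : ℕ → Type v}
    [∀ n, AddCommGroup (M n)] [∀ n, Module R (M n)]
    (hM : ∀ n, Module.Projective R (M n))
    (φ : ∀ n, M n →ₗ[R] M (n + 1)) :
    ∃ (P₀ P₁ : Type (max u v)) (_ : AddCommGroup P₀) (_ : AddCommGroup P₁)
      (_ : Module R P₀) (_ : Module R P₁),
      Module.Projective R P₀ ∧ Module.Projective R P₁ ∧
      ∃ (π : P₀ →ₗ[R] Module.DirectLimit M (natLERecMap φ)) (j : P₁ →ₗ[R] P₀),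
        Function.Surjective π ∧ Function.Injective j ∧
        LinearMap.range j = LinearMap.ker π := by
  -- `⨁ n, M n` lives in `Type v`, so it is lifted to the universe of the statement.
  let e : ULift.{u} (⨁ n, M n) ≃ₗ[R] ⨁ n, M n := ULift.moduleEquiv
  have hS : Module.Projective R (⨁ n, M n) :=
    inferInstanceAs (Module.Projective R (Π₀ n, M n))
  have hP : Module.Projective R (ULift.{u} (⨁ n, M n)) := Module.Projective.of_equiv e.symm
  refine ⟨ULift.{u} (⨁ n, M n), ULift.{u} (⨁ n, M n), inferInstance, inferInstance,
    inferInstance, inferInstance, hP, hP, sumToLimit φ ∘ₗ e.toLinearMap,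
    e.symm.toLinearMap ∘ₗ telescope φ ∘ₗ e.toLinearMap, ?_, ?_, ?_⟩
  · exact (sumToLimit_surjective φ).comp e.surjective
  · exact e.symm.injective.comp ((telescope_injective φ).comp e.injective)
  · rw [LinearMap.range_comp, LinearMap.range_comp_of_range_eq_top _ e.range, range_telescope,
      LinearMap.ker_comp]
    exact Submodule.map_equiv_eq_comap_symm e.symm _
end

section
/- Let X be a topological space and let x ∈ X be a point such that the singleton {x} is clopen in X, and let δ_x ∈ C(X,ℤ) denote the locally constant indicator function of {x}. Let M be a left C(X,ℤ)-module on which δ_x acts as the identity, i.e., δ_x • m = m for all m ∈ M. Then M has projective dimension at most 1 as a C(X,ℤ)-module: there exist projective C(X,ℤ)-modules P₀ and P₁, a surjective C(X,ℤ)-linear map π : P₀ → M, and an injective C(X,ℤ)-linear map ι : P₁ → P₀ whose range equals the kernel of π. -/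
/-!
Write `R = C(X,ℤ)` and let `ev : R → ℤ` be evaluation at `x`. Since `r * δ_x = r(x) • δ_x` for every
`r : R`, the ideal `R δ_x` is `ℤ` with `R` acting through `ev`, and it is a direct summand of `R`.
Hence a free abelian group on which `R` acts through `ev` is a direct sum of copies of a projective
module, so it is projective (`projective_of_smul_eq_eval_smul`). The hypothesis on `M` says exactly
that `R` acts on `M` through `ev`, so a two-term free resolution of the abelian group `M`, which
exists because subgroups of free abelian groups are free (`free_submodule_finsupp`), is a
projective resolution over `R`.
-/

universe u v

/-- A submodule `N` of a free module over a principal ideal domain is free, with no finiteness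
assumption on the rank. Well-order the index set `ι`. For each `i`, the `i`-th coordinates of the
elements of `N` supported on `{j | j ≤ i}` form an ideal; choose such an element `g i` whose `i`-th
coordinate generates this ideal. The `g i` with nonzero generator are in triangular form, hence
linearly independent, and they span `N` by well-founded induction on the leading index. -/
theorem free_submodule_finsupp {R : Type u} {ι : Type v} [CommRing R] [IsDomain R]
    [IsPrincipalIdealRing R] (N : Submodule R (ι →₀ R)) : Module.Free R N := by
  classical
  obtain ⟨_, _⟩ := exists_wellFoundedLT ι
  let I : ι → Ideal R := fun i =>
    (N ⊓ Finsupp.supported R R (Set.Iic i)).map (Finsupp.lapply i)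
  let a : ι → R := fun i => Submodule.IsPrincipal.generator (I i)
  have hg : ∀ i, ∃ g : N, (∀ j, i < j → (g : ι →₀ R) j = 0) ∧ (g : ι →₀ R) i = a i := by
    intro i
    obtain ⟨g, ⟨hgN, hgs⟩, hgi⟩ := Submodule.IsPrincipal.generator_mem (I i)
    refine ⟨⟨g, hgN⟩, fun j hj => ?_, hgi⟩
    by_contra hne
    exact absurd (hgs (Finsupp.mem_support_iff.mpr hne)) (not_le.mpr hj)
  choose g hg0 hgi using hg
  let v : {i // a i ≠ 0} → N := fun i => g i
  have hli : LinearIndependent R v := by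
    refine (linearIndependent_iff (R := R) (M := N) (v := v)).mpr ?_
    intro l hl
    by_contra hne
    have hs : l.support.Nonempty := Finsupp.support_nonempty_iff.mpr hne
    let m := l.support.max' hs
    have hm : m ∈ l.support := l.support.max'_mem hs
    have h := congrArg (Finsupp.lapply (m : ι) ∘ₗ N.subtype) hl
    rw [Finsupp.linearCombination_apply, Finsupp.sum, map_sum, map_zero,
      Finset.sum_eq_single m] at h
    · have h' : l m * (g m : ι →₀ R) m = 0 := h
      rw [hgi] at h'
      exact (mul_eq_zero.mp h').elim (Finsupp.mem_support_iff.mp hm) m.2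
    · intro j hj hjm
      have hlt : j < m := lt_of_le_of_ne (l.support.le_max' j hj) hjm
      change l j * (g j : ι →₀ R) m = 0
      rw [hg0 j m hlt, mul_zero]
    · exact fun hn => absurd hm hn
  have hind : ∀ i, ∀ f : N, (∀ j, i < j → (f : ι →₀ R) j = 0) →
      f ∈ Submodule.span R (Set.range v) := by
    intro i
    induction i using WellFoundedLT.induction with
    | ind i ih =>
    intro f hf
    -- Elements whose leading index is strictly below `i` are covered by the induction hypothesis.
    have hlow : ∀ f' : N, (∀ j, i ≤ j → (f' : ι →₀ R) j = 0) →
        f' ∈ Submodule.span R (Set.range v) := by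
      intro f' hf'
      by_cases h0 : (f' : ι →₀ R) = 0
      · rw [Submodule.coe_eq_zero.mp h0]
        exact zero_mem _
      · have hs := Finsupp.support_nonempty_iff.mpr h0
        refine ih ((f' : ι →₀ R).support.max' hs) ?_ f' fun j hj => ?_
        · by_contra hle
          exact Finsupp.mem_support_iff.mp (Finset.max'_mem _ hs) (hf' _ (not_lt.mp hle))
        · by_contra hne
          exact absurd (Finset.le_max' _ j (Finsupp.mem_support_iff.mpr hne)) (not_le.mpr hj)
    have hfI : (f : ι →₀ R) i ∈ I i := by
      refine ⟨f, ⟨f.2, fun j hj => ?_⟩, rfl⟩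
      by_contra hne
      exact Finsupp.mem_support_iff.mp hj (hf j (not_le.mp hne))
    obtain ⟨c, hc⟩ := (Submodule.IsPrincipal.mem_iff_eq_smul_generator (I i)).mp hfI
    have hc' : (f : ι →₀ R) i = c * a i := hc
    by_cases ha : a i = 0
    · refine hlow f fun j hj => ?_
      rcases hj.eq_or_lt with rfl | hj
      · rw [hc', ha, mul_zero]
      · exact hf j hj
    · rw [← sub_add_cancel f (c • g i)]
      refine add_mem (hlow _ fun j hj => ?_)
        (Submodule.smul_mem _ c (Submodule.subset_span ⟨⟨i, ha⟩, rfl⟩))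
      change (f : ι →₀ R) j - c * (g i : ι →₀ R) j = 0
      rcases hj.eq_or_lt with rfl | hj
      · rw [hc', hgi, sub_self]
      · rw [hf j hj, hg0 i j hj, mul_zero, sub_zero]
  refine Module.Free.of_basis (Module.Basis.mk hli fun f _ => ?_)
  by_cases h0 : (f : ι →₀ R) = 0
  · rw [Submodule.coe_eq_zero.mp h0]
    exact zero_mem _
  · have hs := Finsupp.support_nonempty_iff.mpr h0
    refine hind ((f : ι →₀ R).support.max' hs) f fun j hj => ?_
    by_contra hne
    exact absurd (Finset.le_max' _ j (Finsupp.mem_support_iff.mpr hne)) (not_le.mpr hj)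

theorem mul_charFn_singleton {X : Type u} [TopologicalSpace X] {x : X}
    (hx : IsClopen ({x} : Set X)) (r : LocallyConstant X ℤ) :
    r * LocallyConstant.charFn ℤ hx = r x • LocallyConstant.charFn ℤ hx := by
  ext y
  change r y * LocallyConstant.charFn ℤ hx y = r x * LocallyConstant.charFn ℤ hx y
  by_cases hy : y = x
  · rw [hy]
  · simp [LocallyConstant.coe_charFn, hy]

/-- The section splitting the surjection from a free `C(X,ℤ)`-module sends the `i`-th vector of a
`ℤ`-basis to `δ_x` placed in the `i`-th coordinate. -/
theorem projective_of_smul_eq_eval_smul {X : Type u} [TopologicalSpace X] {x : X}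
    (hx : IsClopen ({x} : Set X)) (F : Type v) [AddCommGroup F] [Module.Free ℤ F]
    [Module (LocallyConstant X ℤ) F]
    (h : ∀ (r : LocallyConstant X ℤ) (f : F), r • f = r x • f) :
    Module.Projective (LocallyConstant X ℤ) F := by
  let b := Module.Free.chooseBasis ℤ F
  let s : F →ₗ[ℤ] (Module.Free.ChooseBasisIndex ℤ F →₀ LocallyConstant X ℤ) :=
    b.constr ℤ fun i => Finsupp.single i (LocallyConstant.charFn ℤ hx)
  have hs : ∀ i, s (b i) = Finsupp.single i (LocallyConstant.charFn ℤ hx) :=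
    fun i => b.constr_basis ℤ _ i
  have hsmul : ∀ (r : LocallyConstant X ℤ) (f : F), r • s f = r x • s f := by
    intro r f
    have hr : (DistribSMul.toAddMonoidHom _ r).toIntLinearMap ∘ₗ s = r x • s := by
      refine b.ext fun i => ?_
      change r • s (b i) = r x • s (b i)
      rw [hs, Finsupp.smul_single, Finsupp.smul_single, smul_eq_mul, mul_charFn_singleton]
    exact LinearMap.congr_fun hr f
  let s' : F →ₗ[LocallyConstant X ℤ]
      (Module.Free.ChooseBasisIndex ℤ F →₀ LocallyConstant X ℤ) :=
    { toFun := s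
      map_add' := map_add s
      map_smul' := fun r f => by rw [h, map_smul, RingHom.id_apply, hsmul] }
  let p := Finsupp.linearCombination (LocallyConstant X ℤ) b
  refine Module.Projective.of_split s' p ?_
  have hps : p.toAddMonoidHom.toIntLinearMap ∘ₗ s = LinearMap.id := by
    refine b.ext fun i => ?_
    change p (s (b i)) = b i
    rw [hs, Finsupp.linearCombination_single, h]
    simp [LocallyConstant.coe_charFn]
  ext f
  exact LinearMap.congr_fun hps f

/-- If `{x}` is clopen in `X` and `M` is a `C(X,ℤ)`-module on which the indicator function
`δ_x` of `{x}` acts as the identity, then `M` has projective dimension at most `1` as a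
`C(X,ℤ)`-module. -/
theorem projectiveDimension_le_one_of_charFn_smul_eq_self
    {X : Type u} [TopologicalSpace X] {x : X} (hx : IsClopen ({x} : Set X))
    (M : Type v) [AddCommGroup M] [Module (LocallyConstant X ℤ) M]
    (hδ : ∀ m : M, LocallyConstant.charFn ℤ hx • m = m) :
    ∃ (P₀ P₁ : Type (max u v)) (_ : AddCommGroup P₀) (_ : AddCommGroup P₁)
      (_ : Module (LocallyConstant X ℤ) P₀) (_ : Module (LocallyConstant X ℤ) P₁),
      Module.Projective (LocallyConstant X ℤ) P₀ ∧
      Module.Projective (LocallyConstant X ℤ) P₁ ∧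
      ∃ (π : P₀ →ₗ[LocallyConstant X ℤ] M) (j : P₁ →ₗ[LocallyConstant X ℤ] P₀),
        Function.Surjective π ∧ Function.Injective j ∧
        LinearMap.range j = LinearMap.ker π := by
  have hM : ∀ (r : LocallyConstant X ℤ) (m : M), r • m = r x • m := by
    intro r m
    conv_lhs => rw [← hδ m]
    rw [← mul_smul, mul_charFn_singleton, smul_assoc, hδ]
  let ev : LocallyConstant X ℤ →+* ℤ := LocallyConstant.evalRingHom x
  -- `ULift` only adjusts the universe of the generating set.
  let F := ULift.{u} M →₀ ℤ
  let q : F →ₗ[ℤ] M := Finsupp.linearCombination ℤ ULift.down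
  let K := LinearMap.ker q
  have freeK : Module.Free ℤ K := free_submodule_finsupp K
  let modF : Module (LocallyConstant X ℤ) F := Module.compHom F ev
  let modK : Module (LocallyConstant X ℤ) K := Module.compHom K ev
  have hF : ∀ (r : LocallyConstant X ℤ) (f : F), r • f = r x • f := fun _ _ => rfl
  have hK : ∀ (r : LocallyConstant X ℤ) (f : K), r • f = r x • f := fun _ _ => rfl
  refine ⟨F, K, inferInstance, inferInstance, modF, modK,
    projective_of_smul_eq_eval_smul hx F hF, projective_of_smul_eq_eval_smul hx K hK,
    { toFun := q
      map_add' := map_add q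
      map_smul' := fun r f => by rw [hF, map_smul, RingHom.id_apply, hM] },
    { toFun := K.subtype
      map_add' := map_add K.subtype
      map_smul' := fun r f => by rw [hK, map_smul, RingHom.id_apply, hF] }, ?_, ?_, ?_⟩
  · intro m
    refine ⟨Finsupp.single ⟨m⟩ 1, ?_⟩
    exact (Finsupp.linearCombination_single ℤ _ _).trans (one_smul ℤ m)
  · exact K.subtype_injective
  · ext f
    constructor
    · rintro ⟨k, rfl⟩
      exact k.2
    · intro hf
      exact ⟨⟨f, hf⟩, rfl⟩
end

section
/- Let X = ℕ∪{∞} be the one-point compactification of the discrete space ℕ (OnePoint ℕ in Lean), and for each n ∈ ℕ let δ_n ∈ C(X,ℤ) denote the indicator function of the clopen singleton {n}. Let M be a countably generated left C(X,ℤ)-module such that δ_n • m = 0 for every n ∈ ℕ and every m ∈ M, and such that M is torsion-free as an abelian group (for every nonzero integer k and every m ∈ M, k • m = 0 implies m = 0). Then M has projective dimension at most 1 as a C(X,ℤ)-module: there exist projective C(X,ℤ)-modules P₀ and P₁, a surjective C(X,ℤ)-linear map π : P₀ → M, and an injective C(X,ℤ)-linear map ι : P₁ → P₀ whose range equals the kernel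 of π. -/
/-!
Write `R = C(ℕ∪{∞}, ℤ)` and `e j = 1 - ∑_{k < j} δ_k`. For every `r : R` the products `e j * r` and
`e j * r(∞)` agree for large `j`, because `r` is constant near `∞`. As each `e j` acts as the
identity on `M`, the ring `R` acts on `M` through evaluation at `∞`, so `M` is countably generated
as an abelian group. Hence `M` is the union of an increasing sequence of finitely generated
subgroups `F i`, and these are free because `M` is torsion-free.

The module `M` is then the colimit of the projective modules `R ⊗ F i` along the maps
`T i = e i • (R ⊗ inclusion)`: an element of `R ⊗ F i` that dies in `M` is killed by `e j` for large
`j`, hence by a composite of the `T i`. The telescope `id - shift` on `⨁ i, R ⊗ F i` is injective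
with cokernel this colimit, which is the required resolution of length one.

The argument uses only the sequence `e` and the evaluation map, so it is carried out for a general
commutative ring `R` with a ring homomorphism `ev : R →+* ℤ` and such a sequence.
-/

universe u

open OnePoint

/-- Each singleton `{n}`, `n ∈ ℕ`, is clopen in the one-point compactification `ℕ ∪ {∞}`. -/
theorem OnePoint.isClopen_singleton_natCoe (n : ℕ) :
    IsClopen ({(n : OnePoint ℕ)} : Set (OnePoint ℕ)) := by
  constructor
  · rw [← Set.image_singleton, isClosed_image_coe]
    exact ⟨isClosed_singleton, isCompact_singleton⟩
  · rw [← Set.image_singleton]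
    exact isOpenMap_coe _ (isOpen_discrete _)

/-- `δ_n`: the locally constant indicator function of the clopen singleton `{n}` in the
one-point compactification `ℕ ∪ {∞}`. -/
noncomputable def deltaFn (n : ℕ) : LocallyConstant (OnePoint ℕ) ℤ :=
  LocallyConstant.charFn ℤ (OnePoint.isClopen_singleton_natCoe n)

open scoped TensorProduct DirectSum

/-! ### The telescope of the modules `R ⊗ F i` -/

namespace Telescope

section

variable {R : Type*} [CommRing R] {M : Type*} [AddCommGroup M]
  (e : ℕ → R) (F : ℕ → Submodule ℤ M) (hF : Monotone F)

/-- The base change `R ⊗ F i → R ⊗ F j` of the inclusion of subgroups `F i ≤ F j`. -/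
noncomputable def incl {i j : ℕ} (h : i ≤ j) : R ⊗[ℤ] F i →ₗ[R] R ⊗[ℤ] F j :=
  (Submodule.inclusion (hF h)).baseChange R

lemma incl_incl {i j k : ℕ} (h : i ≤ j) (h' : j ≤ k) (x : R ⊗[ℤ] F i) :
    incl F hF h' (incl F hF h x) = incl F hF (h.trans h') x := by
  induction x with
  | zero => simp
  | add x y hx hy => simp only [map_add, hx, hy]
  | tmul r f => rfl

lemma incl_refl {i : ℕ} (x : R ⊗[ℤ] F i) : incl F hF le_rfl x = x := by
  induction x with
  | zero => simp
  | add x y hx hy => simp only [map_add, hx, hy]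
  | tmul r f => rfl

/-- The transition map `T i = e i • (R ⊗ inclusion)` of the sequential system. -/
noncomputable def T (i : ℕ) : R ⊗[ℤ] F i →ₗ[R] R ⊗[ℤ] F (i + 1) :=
  e i • incl F hF i.le_succ

/-- Stated for this family because instance search does not match the general group structure on
direct sums with the additive monoid structures of the summands `R ⊗ F i`. -/
noncomputable instance : AddCommGroup (⨁ i, R ⊗[ℤ] F i) :=
  inferInstanceAs (AddCommGroup (Π₀ i, R ⊗[ℤ] F i))

/-- The endomorphism of `⨁ i, R ⊗ F i` given by `T i` from the `i`-th to the `(i + 1)`-st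
summand. -/
noncomputable def shift : (⨁ i, R ⊗[ℤ] F i) →ₗ[R] ⨁ i, R ⊗[ℤ] F i :=
  DirectSum.toModule R ℕ _ fun i => DirectSum.lof R ℕ (fun i => R ⊗[ℤ] F i) (i + 1) ∘ₗ T e F hF i

/-- The telescope map `id - shift`. -/
noncomputable def tel : (⨁ i, R ⊗[ℤ] F i) →ₗ[R] ⨁ i, R ⊗[ℤ] F i :=
  LinearMap.id - shift e F hF

lemma shift_zero (x : ⨁ i, R ⊗[ℤ] F i) : shift e F hF x 0 = 0 := by
  induction x using DirectSum.induction_on with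
  | zero => simp
  | add x y hx hy => simp [hx, hy]
  | of i x =>
    rw [← DirectSum.lof_eq_of R, shift, DirectSum.toModule_lof, LinearMap.comp_apply,
      DirectSum.lof_eq_of, DirectSum.of_eq_of_ne]
    simp

lemma shift_succ (x : ⨁ i, R ⊗[ℤ] F i) (n : ℕ) :
    shift e F hF x (n + 1) = T e F hF n (x n) := by
  induction x using DirectSum.induction_on with
  | zero => simp
  | add x y hx hy => simp [hx, hy]
  | of i x =>
    rw [← DirectSum.lof_eq_of R, shift, DirectSum.toModule_lof, LinearMap.comp_apply,
      DirectSum.lof_eq_of, DirectSum.lof_eq_of]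
    by_cases h : n = i
    · subst h
      simp
    · rw [DirectSum.of_eq_of_ne _ _ _ (by omega), DirectSum.of_eq_of_ne _ _ _ h, map_zero]

lemma tel_injective : Function.Injective (tel e F hF) := by
  rw [injective_iff_map_eq_zero]
  intro x hx
  have hx' : x = shift e F hF x := sub_eq_zero.1 hx
  refine DFinsupp.ext fun i => ?_
  induction i with
  | zero => exact (congrArg (fun y => y 0) hx').trans (shift_zero e F hF x)
  | succ n ih =>
    refine (congrArg (fun y => y (n + 1)) hx').trans ((shift_succ e F hF x n).trans ?_)
    have : x n = 0 := ih
    rw [this, map_zero]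
    rfl

lemma tel_lof (i : ℕ) (x : R ⊗[ℤ] F i) :
    tel e F hF (DirectSum.lof R ℕ (fun i => R ⊗[ℤ] F i) i x) =
      DirectSum.lof R ℕ (fun i => R ⊗[ℤ] F i) i x -
      DirectSum.lof R ℕ (fun i => R ⊗[ℤ] F i) (i + 1) (T e F hF i x) := by
  simp [tel, shift, DirectSum.toModule_lof]

/-- Modulo the range of the telescope, an element of the `i`-th summand agrees with its image under
`k` successive transition maps. -/
lemma lof_sub_mem (i k : ℕ) (x : R ⊗[ℤ] F i) :
    DirectSum.lof R ℕ (fun i => R ⊗[ℤ] F i) i x -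
      DirectSum.lof R ℕ (fun i => R ⊗[ℤ] F i) (i + k)
        ((∏ l ∈ Finset.range k, e (i + l)) • incl F hF (Nat.le_add_right i k) x)
      ∈ LinearMap.range (tel e F hF) := by
  induction k with
  | zero =>
    have : incl F hF (Nat.le_add_right i 0) x = x := incl_refl F hF x
    simp only [Finset.range_zero, Finset.prod_empty, one_smul]
    rw [this]
    simp
  | succ k ih =>
    have h := LinearMap.mem_range_self (tel e F hF)
      (DirectSum.lof R ℕ (fun i => R ⊗[ℤ] F i) (i + k)
        ((∏ l ∈ Finset.range k, e (i + l)) • incl F hF (Nat.le_add_right i k) x))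
    rw [tel_lof] at h
    have h2 := add_mem ih h
    rw [sub_add_sub_cancel] at h2
    have hT : T e F hF (i + k)
        ((∏ l ∈ Finset.range k, e (i + l)) • incl F hF (Nat.le_add_right i k) x) =
        (∏ l ∈ Finset.range (k + 1), e (i + l)) • incl F hF (Nat.le_add_right i (k + 1)) x := by
      rw [T, LinearMap.smul_apply, LinearMap.map_smul, incl_incl, Finset.prod_range_succ,
        smul_smul, mul_comm]
    rwa [hT] at h2

lemma exists_lof (x : ⨁ i, R ⊗[ℤ] F i) : ∃ N, ∀ n, N ≤ n → ∃ y,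
    x - DirectSum.lof R ℕ (fun i => R ⊗[ℤ] F i) n y ∈ LinearMap.range (tel e F hF) := by
  induction x using DirectSum.induction_on with
  | zero => exact ⟨0, fun n _ => ⟨0, by simp⟩⟩
  | add x y hx hy =>
    obtain ⟨N, hN⟩ := hx
    obtain ⟨N', hN'⟩ := hy
    refine ⟨max N N', fun n hn => ?_⟩
    obtain ⟨a, ha⟩ := hN n (le_trans (le_max_left _ _) hn)
    obtain ⟨b, hb⟩ := hN' n (le_trans (le_max_right _ _) hn)
    refine ⟨a + b, ?_⟩
    rw [map_add, add_sub_add_comm]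
    exact add_mem ha hb
  | of i x =>
    refine ⟨i, fun n hn => ?_⟩
    obtain ⟨k, rfl⟩ := Nat.exists_eq_add_of_le hn
    exact ⟨_, lof_sub_mem e F hF i k x⟩

/-! ### The cokernel of the telescope -/

variable [Module R M]

/-- The map `R ⊗ F i → M`, `r ⊗ f ↦ r • f`. -/
noncomputable def toM (i : ℕ) : R ⊗[ℤ] F i →ₗ[R] M := (F i).subtype.liftBaseChange R

lemma toM_tmul (i : ℕ) (r : R) (f : F i) : toM F i (r ⊗ₜ f) = r • (f : M) := by
  simp [toM]

lemma toM_incl {i j : ℕ} (h : i ≤ j) (x : R ⊗[ℤ] F i) : toM F j (incl F hF h x) = toM F i x := by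
  induction x with
  | zero => simp
  | add x y hx hy => simp only [map_add, hx, hy]
  | tmul r f => simp [incl, toM_tmul]

/-- The map `⨁ i, R ⊗ F i → M` assembled from the maps `toM`. -/
noncomputable def proj : (⨁ i, R ⊗[ℤ] F i) →ₗ[R] M :=
  DirectSum.toModule R ℕ M (toM F)

lemma proj_lof (i : ℕ) (x : R ⊗[ℤ] F i) :
    proj F (DirectSum.lof R ℕ (fun i => R ⊗[ℤ] F i) i x) = toM F i x := by
  simp [proj, DirectSum.toModule_lof]

lemma proj_tel (he : ∀ j (m : M), e j • m = m) (x : ⨁ i, R ⊗[ℤ] F i) :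
    proj F (tel e F hF x) = 0 := by
  induction x using DirectSum.induction_on with
  | zero => simp
  | add x y hx hy => simp [hx, hy]
  | of i x =>
    rw [← DirectSum.lof_eq_of R, tel_lof, map_sub, proj_lof, proj_lof, T, LinearMap.smul_apply,
      LinearMap.map_smul, he, toM_incl, sub_self]

/-- Far enough along the sequence `e`, an element of `R ⊗ F i` is indistinguishable from `1 ⊗ g`,
where `g` is its image in `M`. -/
lemma exists_eventually (ev : R →+* ℤ)
    (hev : ∀ r, ∃ N, ∀ j, N ≤ j → e j * r = e j * ((ev r : ℤ) : R))
    (hact : ∀ (r : R) (m : M), r • m = ev r • m) (i : ℕ) (x : R ⊗[ℤ] F i) :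
    ∃ g : F i, toM F i x = g ∧ ∃ N, ∀ j, N ≤ j → e j • x = e j • ((1 : R) ⊗ₜ[ℤ] g) := by
  induction x with
  | zero => exact ⟨0, by simp, 0, fun j _ => by simp⟩
  | add x y hx hy =>
    obtain ⟨g, hg, N, hN⟩ := hx
    obtain ⟨g', hg', N', hN'⟩ := hy
    refine ⟨g + g', by simp [hg, hg'], max N N', fun j hj => ?_⟩
    rw [smul_add, hN j (le_trans (le_max_left _ _) hj), hN' j (le_trans (le_max_right _ _) hj),
      TensorProduct.tmul_add, smul_add]
  | tmul r f =>
    obtain ⟨N, hN⟩ := hev r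
    refine ⟨ev r • f, by rw [toM_tmul, hact]; rfl, N, fun j hj => ?_⟩
    rw [← TensorProduct.smul_tmul, TensorProduct.smul_tmul', TensorProduct.smul_tmul', smul_eq_mul,
      smul_eq_mul, hN j hj, zsmul_one]

lemma range_tel (ev : R →+* ℤ)
    (hev : ∀ r, ∃ N, ∀ j, N ≤ j → e j * r = e j * ((ev r : ℤ) : R))
    (he : ∀ j (m : M), e j • m = m)
    (hact : ∀ (r : R) (m : M), r • m = ev r • m) :
    LinearMap.range (tel e F hF) = LinearMap.ker (proj F) := by
  refine le_antisymm ?_ fun x hx => ?_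
  · rintro _ ⟨x, rfl⟩
    exact proj_tel e F hF he x
  · obtain ⟨n, hn⟩ := exists_lof e F hF x
    obtain ⟨y, z, hz⟩ := hn n le_rfl
    have hy : toM F n y = 0 := by
      have h := proj_tel e F hF he z
      rw [hz, map_sub, LinearMap.mem_ker.1 hx, proj_lof, zero_sub, neg_eq_zero] at h
      exact h
    obtain ⟨g, hg, N, hN⟩ := exists_eventually e F ev hev hact n y
    have hg0 : g = 0 := Subtype.ext (hg.symm.trans hy)
    have h0 : e (n + N) • y = 0 := by rw [hN _ (Nat.le_add_left _ _), hg0]; simp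
    -- The factor `e (n + N)` of the coefficient kills `y`, so `y` dies after `N + 1` steps.
    have h := lof_sub_mem e F hF n (N + 1) y
    rw [Finset.prod_range_succ, mul_smul, ← LinearMap.map_smul, h0, map_zero, smul_zero, map_zero,
      sub_zero] at h
    have h2 := add_mem (LinearMap.mem_range.2 ⟨z, hz⟩) h
    rwa [sub_add_cancel] at h2

lemma proj_surjective (hsup : ∀ m : M, ∃ i, m ∈ F i) :
    Function.Surjective (proj (R := R) F) := by
  intro m
  obtain ⟨i, hi⟩ := hsup m
  exact ⟨DirectSum.lof R ℕ (fun i => R ⊗[ℤ] F i) i (1 ⊗ₜ ⟨m, hi⟩), by simp [proj_lof, toM_tmul]⟩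

end

/-- The resolution of length one for a countably generated torsion-free group `M` on which a
commutative ring `R` acts through `ev : R →+* ℤ`, when `ev` is approximated by the sequence `e`. -/
theorem exists_resolution {R : Type} [CommRing R] {M : Type u} [AddCommGroup M] [Module R M]
    (e : ℕ → R) (ev : R →+* ℤ)
    (hev : ∀ r, ∃ N, ∀ j, N ≤ j → e j * r = e j * ((ev r : ℤ) : R))
    (he : ∀ j (m : M), e j • m = m)
    (hcg : ∃ S : Set M, S.Countable ∧ Submodule.span R S = ⊤)
    (htf : ∀ k : ℤ, k ≠ 0 → ∀ m : M, k • m = 0 → m = 0) :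
    ∃ (P₀ P₁ : Type u) (_ : AddCommGroup P₀) (_ : AddCommGroup P₁) (_ : Module R P₀)
      (_ : Module R P₁), Module.Projective R P₀ ∧ Module.Projective R P₁ ∧
      ∃ (π : P₀ →ₗ[R] M) (j : P₁ →ₗ[R] P₀), Function.Surjective π ∧ Function.Injective j ∧
        LinearMap.range j = LinearMap.ker π := by
  have hact : ∀ (r : R) (m : M), r • m = ev r • m := by
    intro r m
    obtain ⟨N, hN⟩ := hev r
    calc r • m = (e N * r) • m := by rw [mul_smul, he]
      _ = ev r • m := by rw [hN N le_rfl, mul_smul, he, Int.cast_smul_eq_zsmul]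
  obtain ⟨S, hS, hspan⟩ := hcg
  have hspan' : Submodule.span ℤ S = ⊤ := by
    refine eq_top_iff.2 fun m _ => ?_
    have hm : m ∈ Submodule.span R S := hspan ▸ Submodule.mem_top
    induction hm using Submodule.span_induction with
    | mem x hx => exact Submodule.subset_span hx
    | zero => exact zero_mem _
    | add x y _ _ hx hy => exact add_mem (hx trivial) (hy trivial)
    | smul r x _ hx => rw [hact]; exact Submodule.smul_mem _ _ (hx trivial)
  obtain ⟨s, hs⟩ := Set.countable_iff_exists_subset_range.1 hS
  let F : ℕ → Submodule ℤ M := fun i => Submodule.span ℤ (s '' Set.Iio i)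
  have hF : Monotone F := fun i j h =>
    Submodule.span_mono (Set.image_mono (Set.Iio_subset_Iio h))
  have hsup : ∀ m : M, ∃ i, m ∈ F i := by
    intro m
    have hm : m ∈ Submodule.span ℤ S := hspan' ▸ Submodule.mem_top
    have hle : Submodule.span ℤ S ≤ ⨆ i, F i := by
      refine Submodule.span_le.2 fun x hx => ?_
      obtain ⟨i, rfl⟩ := hs hx
      exact Submodule.mem_iSup_of_mem (i + 1)
        (Submodule.subset_span ⟨i, Set.mem_Iio.2 i.lt_succ_self, rfl⟩)
    exact (Submodule.mem_iSup_of_directed F hF.directed_le).1 (hle hm)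
  have hfree : ∀ i, Module.Projective ℤ (F i) := by
    intro i
    have : Module.Finite ℤ (F i) :=
      Module.Finite.iff_fg.2 (Submodule.fg_span ((Set.finite_Iio i).image s))
    have : Module.IsTorsionFree ℤ (F i) :=
      Module.IsTorsionFree.of_smul_eq_zero fun k x h => by
        by_contra! hc
        exact hc.2 (Subtype.ext (htf k hc.1 x (congrArg Subtype.val h)))
    infer_instance
  exact ⟨⨁ i, R ⊗[ℤ] F i, ⨁ i, R ⊗[ℤ] F i, inferInstance, inferInstance, inferInstance,
    inferInstance, inferInstance, inferInstance, proj F, tel e F hF, proj_surjective F hsup,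
    tel_injective e F hF, range_tel e F hF ev hev he hact⟩

end Telescope

/-! ### Locally constant functions on `ℕ ∪ {∞}` -/

lemma deltaFn_apply_coe (k n : ℕ) : deltaFn k (n : OnePoint ℕ) = if n = k then 1 else 0 := by
  classical
  simp [deltaFn, LocallyConstant.charFn, Set.indicator_apply]

lemma deltaFn_apply_infty (k : ℕ) : deltaFn k (∞ : OnePoint ℕ) = 0 := by
  simp [deltaFn, LocallyConstant.charFn]

lemma exists_forall_apply_eq_infty (r : LocallyConstant (OnePoint ℕ) ℤ) :
    ∃ N : ℕ, ∀ n, N ≤ n → r (n : OnePoint ℕ) = r ∞ := by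
  have hopen := r.isLocallyConstant.isOpen_fiber (r ∞)
  have hmem : ∞ ∈ {x | r.toFun x = r ∞} := rfl
  have hfin := ((OnePoint.isOpen_iff_of_mem hmem).1 hopen).2.finite_of_discrete
  obtain ⟨N, hN⟩ := hfin.bddAbove
  refine ⟨N + 1, fun n hn => ?_⟩
  by_contra h
  exact absurd (hN (show n ∈ _ from h)) (by omega)

/-- A countably generated `C(ℕ∪{∞},ℤ)`-module annihilated by every `δ_n`, `n ∈ ℕ`, which is
torsion-free as an abelian group, has projective dimension at most `1`. -/
theorem projectiveDimension_le_one_of_deltaFn_smul_eq_zero_of_torsionFree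
    (M : Type u) [AddCommGroup M] [Module (LocallyConstant (OnePoint ℕ) ℤ) M]
    (hcg : ∃ S : Set M, S.Countable ∧ Submodule.span (LocallyConstant (OnePoint ℕ) ℤ) S = ⊤)
    (hδ : ∀ (n : ℕ) (m : M), deltaFn n • m = 0)
    (htf : ∀ k : ℤ, k ≠ 0 → ∀ m : M, k • m = 0 → m = 0) :
    ∃ (P₀ P₁ : Type u) (_ : AddCommGroup P₀) (_ : AddCommGroup P₁)
      (_ : Module (LocallyConstant (OnePoint ℕ) ℤ) P₀)
      (_ : Module (LocallyConstant (OnePoint ℕ) ℤ) P₁),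
      Module.Projective (LocallyConstant (OnePoint ℕ) ℤ) P₀ ∧
      Module.Projective (LocallyConstant (OnePoint ℕ) ℤ) P₁ ∧
      ∃ (π : P₀ →ₗ[LocallyConstant (OnePoint ℕ) ℤ] M)
        (j : P₁ →ₗ[LocallyConstant (OnePoint ℕ) ℤ] P₀),
        Function.Surjective π ∧ Function.Injective j ∧
        LinearMap.range j = LinearMap.ker π := by
  refine Telescope.exists_resolution (fun j => 1 - ∑ k ∈ Finset.range j, deltaFn k)
    (LocallyConstant.evalRingHom (∞ : OnePoint ℕ)) (fun r => ?_) (fun j m => ?_) hcg htf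
  · obtain ⟨N, hN⟩ := exists_forall_apply_eq_infty r
    refine ⟨N, fun j hj => LocallyConstant.ext fun x => ?_⟩
    have hcast : ∀ (a : ℤ) (y : OnePoint ℕ),
        ((a : LocallyConstant (OnePoint ℕ) ℤ) : LocallyConstant (OnePoint ℕ) ℤ) y = a :=
      fun a y => by
        have h := map_intCast
          (LocallyConstant.evalRingHom y : LocallyConstant (OnePoint ℕ) ℤ →+* ℤ) a
        exact h
    have hsum : ∀ y : OnePoint ℕ, (∑ k ∈ Finset.range j, deltaFn k) y
        = ∑ k ∈ Finset.range j, deltaFn k y :=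
      fun y => map_sum (LocallyConstant.evalRingHom y : LocallyConstant (OnePoint ℕ) ℤ →+* ℤ) _ _
    rw [LocallyConstant.mul_apply, LocallyConstant.mul_apply, hcast]
    change _ * r x = _ * r ∞
    induction x using OnePoint.rec with
    | infty => rfl
    | coe n =>
      by_cases hn : N ≤ n
      · rw [hN n hn]
      · have h0 : (1 - ∑ k ∈ Finset.range j, deltaFn k) (n : OnePoint ℕ) = 0 := by
          rw [LocallyConstant.sub_apply, hsum]
          have hnj : n < j := by omega
          simp [deltaFn_apply_coe, hnj]
        rw [h0, zero_mul, zero_mul]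
  · rw [sub_smul, one_smul, Finset.sum_smul, Finset.sum_eq_zero fun k _ => hδ k m, sub_zero]
end

section
/- Let X = ℕ∪{∞} be the one-point compactification of the discrete space ℕ (OnePoint ℕ in Lean), and for each n ∈ ℕ let δ_n ∈ C(X,ℤ) denote the indicator function of the clopen singleton {n}. Let M be a countably generated left C(X,ℤ)-module, and let N ⊆ M be the C(X,ℤ)-submodule generated by the set { δ_n • m : n ∈ ℕ, m ∈ M }. If the quotient module M/N is torsion-free as an abelian group (for every nonzero integer k and every x ∈ M/N, k • x = 0 implies x = 0), then M has projective dimension at most 1 as a C(X,ℤ)-module: there exist projective C(X,ℤ)-modules P₀ and P₁, a surjective C(X,ℤ)-linear map π : P₀ → M, and an injective C(X,ℤ)-linear map ι : P₁ → P₀ whose range equals the kernel of π. -/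
/-!
Write `R = C(ℕ ∪ {∞}, ℤ)`, the ring of eventually constant integer sequences. Choose a surjection
`π : F → M` from the free module `F = J →₀ R` with `J` countable; the claim is that its kernel `K` is
projective.

An element of `F` agrees with a constant `v ∈ J →₀ ℤ` on a neighbourhood `[m, ∞]` of `∞`. Let `K_∞`
be the subgroup of `J →₀ ℤ` of germs at `∞` of elements of `K`, and `K_i` the fibre of `K` at `i ∈ ℕ`.
An element of `M` lies in `N` exactly when it is killed by the indicator function of some `[m, ∞]`,
so the torsion-freeness of `M/N` says that `K_∞` is pure in `J →₀ ℤ`. Being a subgroup of a free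
abelian group, `K_∞` has a basis `(e_n)` (`free_submodule_int`), which is countable. Choose
`m_n → ∞` with `1_{[m_n, ∞]} e_n ∈ K`. At the point `i` only the finitely many `e_n` with `m_n ≤ i` are
seen; they span a pure finitely generated subgroup of `J →₀ ℤ`, hence extend to a basis of `K_i` by a
family `b_i` (`exists_complement_basis`). The elements `1_{[m_n, ∞]} e_n` and `δ_i b_{i,t}` together
exhibit `K` as a direct sum of ideals of `R` generated by idempotents
(`projective_of_idempotent_basis`, `projective_of_pure`).
-/

universe u

open OnePoint

/-! ### Subgroups of free abelian groups -/

/-- A subgroup `K` of a free abelian group of arbitrary rank is free. Well-order a basis of the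
ambient group; for each index `i` the `i`-th coefficients of the elements of `K` with no coefficient
above `i` form an ideal `(a i)`, and elements `x i ∈ K` realizing the nonzero `a i` form a basis. -/
theorem free_submodule_int {V : Type*} [AddCommGroup V] [Module.Free ℤ V]
    (K : Submodule ℤ V) : Module.Free ℤ K := by
  classical
  obtain ⟨⟨ι, B⟩⟩ := Module.Free.exists_basis (R := ℤ) (M := V)
  obtain ⟨_, _⟩ := exists_wellFoundedLT ι
  -- `D i` consists of the elements of `K` with no coefficient above `i`, and `A i` is the ideal of
  -- their `i`-th coefficients.
  let D (i : ι) : Submodule ℤ V :=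
    { carrier := {x | x ∈ K ∧ ∀ j, i < j → B.repr x j = 0}
      add_mem' := fun hx hy => ⟨K.add_mem hx.1 hy.1, fun j hj => by
        simp [hx.2 j hj, hy.2 j hj]⟩
      zero_mem' := ⟨K.zero_mem, by simp⟩
      smul_mem' := fun c x hx => ⟨K.smul_mem c hx.1, fun j hj => by simp [hx.2 j hj]⟩ }
  let A (i : ι) : Submodule ℤ ℤ := (D i).map (B.coord i)
  let a (i : ι) : ℤ := Submodule.IsPrincipal.generator (A i)
  have ha (i : ι) : ∃ x ∈ D i, B.repr x i = a i := by
    have := Submodule.IsPrincipal.generator_mem (A i)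
    obtain ⟨x, hx, h⟩ := this
    exact ⟨x, hx, h⟩
  choose x hxD hxa using ha
  let T := {i : ι // a i ≠ 0}
  have hli : LinearIndependent ℤ (fun t : T => (⟨x t, (hxD t).1⟩ : K)) := by
    rw [linearIndependent_iff]
    intro l hl
    by_contra hne
    have hs : l.support.Nonempty := Finsupp.support_nonempty_iff.2 hne
    let t := l.support.max' hs
    have ht : l t ≠ 0 := Finsupp.mem_support_iff.1 (l.support.max'_mem hs)
    have h0 : B.repr (K.subtype (Finsupp.linearCombination ℤ
        (fun t : T => (⟨x t, (hxD t).1⟩ : K)) l)) t = 0 := by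
      rw [hl]; simp
    rw [Finsupp.linearCombination_apply, Finsupp.sum, map_sum, map_sum,
      Finsupp.finsetSum_apply, Finset.sum_eq_single t] at h0
    · simp only [_root_.map_smul, Submodule.subtype_apply, Finsupp.smul_apply, smul_eq_mul, hxa] at h0
      exact (mul_ne_zero ht t.2) h0
    · intro u hu hut
      have hlt : u < t := lt_of_le_of_ne (l.support.le_max' u hu) hut
      simp [(hxD u).2 t hlt]
    · intro h
      exact absurd (l.support.max'_mem hs) h
  have hsp : ∀ i : ι, ∀ y, ∀ hy : y ∈ D i,
      (⟨y, hy.1⟩ : K) ∈ Submodule.span ℤ (Set.range (fun t : T => (⟨x t, (hxD t).1⟩ : K))) := by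
    intro i
    induction i using WellFoundedLT.induction with
    | ind i ih =>
    intro y hy
    have hmem : B.repr y i ∈ A i := ⟨y, hy, rfl⟩
    obtain ⟨c, hc⟩ := (Submodule.IsPrincipal.mem_iff_eq_smul_generator (A i)).1 hmem
    change B.repr y i = c * a i at hc
    -- Elements of `K` whose coefficients vanish from `i` on are covered by the induction hypothesis;
    -- this applies to `y - c • x i`, and also to `c • x i` when `a i = 0`.
    have key : ∀ z, ∀ hz : z ∈ K, (∀ j, i ≤ j → B.repr z j = 0) → (⟨z, hz⟩ : K) ∈
        Submodule.span ℤ (Set.range (fun t : T => (⟨x t, (hxD t).1⟩ : K))) := by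
      intro z hz hzi
      by_cases hs : (B.repr z).support.Nonempty
      · let j := (B.repr z).support.max' hs
        have hj : B.repr z j ≠ 0 := Finsupp.mem_support_iff.1 ((B.repr z).support.max'_mem hs)
        refine ih j ?_ z ⟨hz, ?_⟩
        · by_contra h
          exact hj (hzi j (not_lt.1 h))
        · intro k hk
          by_contra h
          exact absurd ((B.repr z).support.le_max' k (Finsupp.mem_support_iff.2 h)) (not_le.2 hk)
      · have : z = 0 := by
          simpa using hs
        subst this
        exact Submodule.zero_mem _
    have hz := key (y - c • x i) (K.sub_mem hy.1 (K.smul_mem c (hxD i).1)) (by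
      intro j hj
      rcases hj.eq_or_lt with rfl | hj
      · simp [hxa, hc]
      · simp [hy.2 j hj, (hxD i).2 j hj])
    have hcx : (⟨c • x i, K.smul_mem c (hxD i).1⟩ : K) ∈
        Submodule.span ℤ (Set.range (fun t : T => (⟨x t, (hxD t).1⟩ : K))) := by
      by_cases h : a i = 0
      · refine key (c • x i) (K.smul_mem c (hxD i).1) ?_
        intro j hj
        rcases hj.eq_or_lt with rfl | hj
        · simp [hxa, h]
        · simp [(hxD i).2 j hj]
      · exact Submodule.smul_mem _ c (Submodule.subset_span (Set.mem_range_self (⟨i, h⟩ : T)))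
    have := Submodule.add_mem _ hz hcx
    convert this using 1
    ext; simp
  refine Module.Free.of_basis (Module.Basis.mk hli ?_)
  rintro ⟨y, hy⟩ -
  by_cases hs : (B.repr y).support.Nonempty
  · refine hsp ((B.repr y).support.max' hs) y ⟨hy, ?_⟩
    intro k hk
    by_contra h
    exact absurd ((B.repr y).support.le_max' k (Finsupp.mem_support_iff.2 h)) (not_le.2 hk)
  · have : y = 0 := by simpa using hs
    subst this
    exact Submodule.zero_mem _

/-- A finitely generated pure subgroup `U` of a free abelian group is the kernel of a map to a
free abelian group: `U` lives on a finite set `s` of coordinates, and `ℤ^s / U` is finitely generated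
and torsion-free, hence free. -/
theorem exists_ker_eq_of_pure {J : Type u} (U : Submodule ℤ (J →₀ ℤ)) (hfg : U.FG)
    (hpure : ∀ k : ℤ, k ≠ 0 → ∀ v, k • v ∈ U → v ∈ U) :
    ∃ (W : Type u) (_ : AddCommGroup W) (_ : Module.Free ℤ W) (p : (J →₀ ℤ) →ₗ[ℤ] W),
      LinearMap.ker p = U := by
  classical
  obtain ⟨G, hG⟩ := hfg
  let s : Finset J := G.biUnion Finsupp.support
  have hsupp : ∀ u ∈ U, ∀ j ∉ s, u j = 0 := by
    have : U ≤ Finsupp.supported ℤ ℤ (s : Set J) := by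
      rw [← hG, Submodule.span_le]
      intro g hg
      rw [SetLike.mem_coe, Finsupp.mem_supported]
      intro j hj
      exact Finset.mem_coe.2 (Finset.mem_biUnion.2 ⟨g, hg, hj⟩)
    intro u hu j hj
    by_contra h
    exact hj ((Finsupp.mem_supported _ _).1 (this hu) (Finsupp.mem_support_iff.2 h))
  let r : (J →₀ ℤ) →ₗ[ℤ] ((s : Set J) →₀ ℤ) := Finsupp.lsubtypeDomain (s : Set J)
  let r' : (J →₀ ℤ) →ₗ[ℤ] (((s : Set J)ᶜ : Set J) →₀ ℤ) := Finsupp.lsubtypeDomain ((s : Set J)ᶜ)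
  have hrr : ∀ u v, r u = r v → r' u = r' v → u = v := by
    intro u v h h'
    ext j
    by_cases hj : j ∈ s
    · exact DFunLike.congr_fun h ⟨j, hj⟩
    · exact DFunLike.congr_fun h' ⟨j, hj⟩
  have hr' : ∀ u ∈ U, r' u = 0 := by
    intro u hu
    ext j
    exact hsupp u hu j j.2
  let U' : Submodule ℤ ((s : Set J) →₀ ℤ) := U.map r
  have htf : Module.IsTorsionFree ℤ (((s : Set J) →₀ ℤ) ⧸ U') := by
    refine .of_smul_eq_zero ?_
    intro k w hkw
    rw [or_iff_not_imp_left]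
    intro hk
    induction w using Submodule.Quotient.induction_on with
    | H w =>
    rw [← Submodule.Quotient.mk_smul, Submodule.Quotient.mk_eq_zero] at hkw
    rw [Submodule.Quotient.mk_eq_zero]
    obtain ⟨u, hu, huw⟩ := hkw
    let v : J →₀ ℤ := Finsupp.embDomain (Function.Embedding.subtype _) w
    have hv : r v = w := by
      ext j
      exact Finsupp.embDomain_apply_self (Function.Embedding.subtype _) w j
    have hv' : r' v = 0 := by
      ext j
      refine Finsupp.embDomain_of_notMem_range _ _ _ ?_
      rintro ⟨i, hi⟩
      exact j.2 (hi ▸ i.2)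
    refine ⟨v, hpure k hk v ?_, hv⟩
    have hkv : k • v = u := ?_
    · rw [hkv]; exact hu
    refine hrr _ _ ?_ ?_
    · rw [_root_.map_smul, hv, huw]
    · rw [_root_.map_smul, hv', hr' u hu, smul_zero]
  have : Module.Free ℤ (((s : Set J) →₀ ℤ) ⧸ U') := inferInstance
  refine ⟨(((s : Set J) →₀ ℤ) ⧸ U') × (((s : Set J)ᶜ : Set J) →₀ ℤ), inferInstance,
    inferInstance, (U'.mkQ ∘ₗ r).prod r', ?_⟩
  ext v
  simp only [LinearMap.mem_ker, LinearMap.prod_apply, Function.prod_apply, Prod.mk_eq_zero,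
    LinearMap.comp_apply, Submodule.mkQ_apply, Submodule.Quotient.mk_eq_zero]
  constructor
  · rintro ⟨⟨u, hu, huv⟩, h⟩
    rw [← hrr u v huv (by rw [h, hr' u hu])]
    exact hu
  · intro hv
    exact ⟨⟨v, hv, rfl⟩, hr' v hv⟩

/-- A finite independent family in a subgroup `K` of a free abelian group `J →₀ ℤ` whose span is
pure in `J →₀ ℤ` extends to a basis of `K`. -/
theorem exists_complement_basis {J : Type u} (K : Submodule ℤ (J →₀ ℤ)) {σ : Type u} [Finite σ]
    (e : σ → J →₀ ℤ) (he : LinearIndependent ℤ e) (heK : ∀ i, e i ∈ K)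
    (hpure : ∀ k : ℤ, k ≠ 0 → ∀ v, k • v ∈ Submodule.span ℤ (Set.range e) →
      v ∈ Submodule.span ℤ (Set.range e)) :
    ∃ (τ : Type u) (b : τ → J →₀ ℤ), LinearIndependent ℤ (Sum.elim e b) ∧
      Submodule.span ℤ (Set.range (Sum.elim e b)) = K := by
  obtain ⟨W, _, _, p, hp⟩ := exists_ker_eq_of_pure _
    (Submodule.fg_span (Set.finite_range e)) hpure
  have := free_submodule_int (K.map p)
  let β := Module.Free.chooseBasis ℤ (K.map p)
  have hb : ∀ t, ∃ y ∈ K, p y = β t := fun t => (β t).2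
  choose b hbK hpb using hb
  have hβ : LinearIndependent ℤ (p ∘ b) := by
    have h1 : p ∘ b = (K.map p).subtype ∘ β := funext hpb
    rw [h1]
    exact β.linearIndependent.map' _ (Submodule.ker_subtype _)
  have hsK : Submodule.span ℤ (Set.range (Sum.elim e b)) ≤ K := by
    rw [Submodule.span_le]
    rintro _ ⟨t | t, rfl⟩
    · exact heK t
    · exact hbK t
  refine ⟨_, b, he.sum_type (LinearIndependent.of_comp p hβ) ?_, le_antisymm hsK ?_⟩
  · rw [Submodule.disjoint_def]
    intro v hv hv'
    rw [← hp, LinearMap.mem_ker] at hv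
    obtain ⟨c, rfl⟩ := (Finsupp.mem_span_range_iff_exists_finsupp).1 hv'
    have : c = 0 := by
      refine (linearIndependent_iff.1 hβ) c ?_
      rw [← hv, ← Finsupp.linearCombination_apply, Finsupp.apply_linearCombination]
    simp [this]
  · intro v hv
    have hmem : p v ∈ Submodule.span ℤ (Set.range (p ∘ b)) := by
      have h2 : (⟨p v, v, hv, rfl⟩ : K.map p) ∈ Submodule.span ℤ (Set.range β) := by
        rw [β.span_eq]; trivial
      have h3 := Submodule.mem_map_of_mem (f := (K.map p).subtype) h2
      rw [Submodule.map_span, ← Set.range_comp] at h3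
      have h1 : p ∘ b = (K.map p).subtype ∘ β := funext hpb
      rw [h1]
      exact h3
    rw [Set.range_comp, ← Submodule.map_span] at hmem
    obtain ⟨y, hy, hyv⟩ := hmem
    have hker : v - y ∈ Submodule.span ℤ (Set.range e) := by
      rw [← hp, LinearMap.mem_ker, map_sub, hyv, sub_self]
    rw [Set.Sum.elim_range, Submodule.span_union]
    rw [← sub_add_cancel v y]
    exact Submodule.add_mem_sup hker hy

/-! ### The ring of eventually constant sequences -/

/-- The ring `C(ℕ ∪ {∞}, ℤ)`. -/
abbrev CX : Type := LocallyConstant (OnePoint ℕ) ℤ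

/-- The indicator function of `{n | m ≤ n} ∪ {∞}`, written as `1 - ∑_{i < m} δ_i`. -/
noncomputable def tailFn (m : ℕ) : CX := 1 - ∑ i ∈ Finset.range m, deltaFn i

theorem deltaFn_coe (i n : ℕ) : deltaFn i (n : OnePoint ℕ) = if n = i then 1 else 0 := by
  by_cases h : n = i <;> simp [deltaFn, LocallyConstant.charFn, h]

theorem sum_apply' {ι : Type*} (s : Finset ι) (f : ι → CX) (p : OnePoint ℕ) :
    (∑ i ∈ s, f i) p = ∑ i ∈ s, f i p :=
  map_sum (LocallyConstant.evalAddMonoidHom (Y := ℤ) p) f s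

theorem tailFn_coe (m n : ℕ) : tailFn m (n : OnePoint ℕ) = if m ≤ n then 1 else 0 := by
  simp only [tailFn, LocallyConstant.sub_apply, LocallyConstant.one_apply, sum_apply',
    deltaFn_coe, Finset.sum_ite_eq, Finset.mem_range]
  split_ifs <;> omega

theorem intCast_apply' (z : ℤ) (p : OnePoint ℕ) : (z : CX) p = z := rfl

theorem exists_eventually_eq (r : CX) : ∃ m : ℕ, ∀ n : ℕ, m ≤ n → r (n : OnePoint ℕ) = r ∞ := by
  have h1 : ∀ᶠ p in nhds (∞ : OnePoint ℕ), r p = r ∞ :=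
    r.isLocallyConstant.eventually_eq ∞
  have h2 := OnePoint.tendsto_coe_infty.eventually h1
  rw [Filter.coclosedCompact_eq_cocompact, Filter.cocompact_eq_cofinite, Nat.cofinite_eq_atTop] at h2
  exact Filter.eventually_atTop.1 h2

theorem ext_on_nat {r r' : CX} (h : ∀ n : ℕ, r (n : OnePoint ℕ) = r' n) : r = r' := by
  ext p
  induction p using OnePoint.rec with
  | coe n => exact h n
  | infty =>
    obtain ⟨m, hm⟩ := exists_eventually_eq r
    obtain ⟨m', hm'⟩ := exists_eventually_eq r'
    rw [← hm (max m m') (le_max_left _ _), ← hm' (max m m') (le_max_right _ _), h]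

theorem tailFn_mul_of_le {m m' : ℕ} (h : m ≤ m') : tailFn m' * tailFn m = tailFn m' := by
  refine ext_on_nat fun n => ?_
  simp only [LocallyConstant.mul_apply, tailFn_coe]
  split_ifs <;> first | rfl | omega

theorem deltaFn_mul_tailFn {m i : ℕ} (h : m ≤ i) : deltaFn i * tailFn m = deltaFn i := by
  refine ext_on_nat fun n => ?_
  simp only [LocallyConstant.mul_apply, tailFn_coe, deltaFn_coe]
  split_ifs <;> first | rfl | omega

theorem tailFn_mul_deltaFn {m i : ℕ} (h : i < m) : tailFn m * deltaFn i = 0 := by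
  refine ext_on_nat fun n => ?_
  simp only [LocallyConstant.mul_apply, tailFn_coe, deltaFn_coe, LocallyConstant.zero_apply]
  split_ifs <;> first | rfl | omega

theorem deltaFn_mul_self (i : ℕ) : deltaFn i * deltaFn i = deltaFn i := by
  refine ext_on_nat fun n => ?_
  simp only [LocallyConstant.mul_apply, deltaFn_coe]
  split_ifs <;> rfl

theorem deltaFn_mul_eq (i : ℕ) (r : CX) :
    deltaFn i * r = deltaFn i * ((r (i : OnePoint ℕ) : ℤ) : CX) := by
  refine ext_on_nat fun n => ?_
  simp only [LocallyConstant.mul_apply, deltaFn_coe]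
  split_ifs with h
  · subst h; simp [intCast_apply']
  · simp

theorem tailFn_mul_eq {m : ℕ} {r : CX} (h : ∀ n : ℕ, m ≤ n → r (n : OnePoint ℕ) = r ∞) :
    tailFn m * r = tailFn m * ((r ∞ : ℤ) : CX) := by
  refine ext_on_nat fun n => ?_
  simp only [LocallyConstant.mul_apply, tailFn_coe]
  split_ifs with hn
  · simp [h n hn, intCast_apply']
  · simp

theorem eq_tail_add_sum {A : Type*} [AddCommGroup A] [Module CX A] (m : ℕ) (x : A) :
    x = tailFn m • x + ∑ i ∈ Finset.range m, deltaFn i • x := by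
  rw [← Finset.sum_smul, ← add_smul]
  simp [tailFn]

/-! ### Free modules over the ring and their submodules -/

/-- If `L` is onto, `L ∘ E = L` and `E` kills `ker L`, then `E` descends to
a section of `L`. -/
theorem projective_of_ker_le {R F K : Type*} [CommRing R] [AddCommGroup F] [Module R F]
    [AddCommGroup K] [Module R K] [Module.Projective R F] (L : F →ₗ[R] K) (E : F →ₗ[R] F)
    (hL : Function.Surjective L) (hLE : L.comp E = L)
    (hker : LinearMap.ker L ≤ LinearMap.ker E) : Module.Projective R K := by
  let sec : K →ₗ[R] F :=
    ((LinearMap.ker L).liftQ E hker).comp (L.quotKerEquivOfSurjective hL).symm.toLinearMap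
  refine Module.Projective.of_split sec L ?_
  ext1 x
  obtain ⟨c, rfl⟩ := hL x
  have : (L.quotKerEquivOfSurjective hL).symm (L c) = (LinearMap.ker L).mkQ c := by
    rw [LinearEquiv.symm_apply_eq]; rfl
  simp only [LinearMap.comp_apply, sec, LinearEquiv.coe_coe, this, LinearMap.id_apply]
  exact LinearMap.congr_fun hLE c

section FreeModule

variable {J : Type u}

/-- The inclusion of `J →₀ ℤ` into `J →₀ C(ℕ ∪ {∞}, ℤ)` as constant functions. -/
noncomputable def constSec : (J →₀ ℤ) →ₗ[ℤ] (J →₀ CX) :=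
  Finsupp.mapRange.linearMap (Algebra.linearMap ℤ CX)

/-- Coordinatewise evaluation at the point `p`. -/
noncomputable def fibre (p : OnePoint ℕ) : (J →₀ CX) →ₗ[ℤ] (J →₀ ℤ) :=
  Finsupp.mapRange.linearMap (LocallyConstant.evalAddMonoidHom (Y := ℤ) p).toIntLinearMap

theorem constSec_apply (v : J →₀ ℤ) (j : J) : constSec v j = ((v j : ℤ) : CX) := by
  simp [constSec]

theorem fibre_apply (p : OnePoint ℕ) (x : J →₀ CX) (j : J) : fibre p x j = x j p := by
  simp [fibre]

theorem fibre_smul (p : OnePoint ℕ) (r : CX) (x : J →₀ CX) :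
    fibre p (r • x) = r p • fibre p x := by
  ext j
  simp [fibre_apply]

theorem fibre_single (p : OnePoint ℕ) (j : J) (r : CX) :
    fibre p (Finsupp.single j r) = Finsupp.single j (r p) := by
  simp [fibre]

theorem fibre_constSec (p : OnePoint ℕ) (v : J →₀ ℤ) : fibre p (constSec v) = v := by
  ext j
  simp [fibre_apply, constSec_apply, intCast_apply']

theorem deltaFn_smul_eq (i : ℕ) (x : J →₀ CX) :
    deltaFn i • x = deltaFn i • constSec (fibre (i : OnePoint ℕ) x) := by
  ext1 j
  simp only [Finsupp.smul_apply, smul_eq_mul, constSec_apply, fibre_apply]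
  exact deltaFn_mul_eq i _

theorem exists_tailFn_smul_eq (x : J →₀ CX) :
    ∃ m₀ : ℕ, ∀ m, m₀ ≤ m → tailFn m • x = tailFn m • constSec (fibre ∞ x) := by
  choose f hf using exists_eventually_eq
  refine ⟨x.support.sup (fun j => f (x j)), fun m hm => ?_⟩
  ext1 j
  simp only [Finsupp.smul_apply, smul_eq_mul, constSec_apply, fibre_apply]
  by_cases hj : j ∈ x.support
  · refine tailFn_mul_eq fun n hn => hf _ n ?_
    exact (Finset.le_sup (f := fun j => f (x j)) hj).trans (hm.trans hn)
  · simp [Finsupp.notMem_support_iff.1 hj]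

/-- A submodule `K` generated by elements `ε t • w t`, with `ε t` idempotent and `w t` constant, is
projective as soon as in every fibre `i ∈ ℕ` the `w t` with `ε t i ≠ 0` are independent: `K` is then
the direct sum of copies of the ideals generated by the `ε t`. -/
theorem projective_of_idempotent_basis {T : Type u} (K : Submodule CX (J →₀ CX))
    (ε : T → CX) (w : T → J →₀ ℤ) (hε : ∀ t, ε t * ε t = ε t)
    (hspan : Submodule.span CX (Set.range fun t => ε t • constSec (w t)) = K)
    (hli : ∀ i : ℕ, LinearIndepOn ℤ w {t | ε t (i : OnePoint ℕ) ≠ 0}) :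
    Module.Projective CX K := by
  classical
  have hmem : ∀ t, ε t • constSec (w t) ∈ K := fun t =>
    hspan ▸ Submodule.subset_span ⟨t, rfl⟩
  let k : T → K := fun t => ⟨ε t • constSec (w t), hmem t⟩
  let L : (T →₀ CX) →ₗ[CX] K := Finsupp.linearCombination CX k
  -- `E` multiplies the `t`-th coordinate by `ε t`.
  let E : (T →₀ CX) →ₗ[CX] (T →₀ CX) :=
    Finsupp.lsum CX fun t => (Finsupp.lsingle t).comp (LinearMap.lsmul CX CX (ε t))
  have hEs : ∀ s r, E (Finsupp.single s r) = Finsupp.single s (ε s * r) := fun s r => by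
    rw [Finsupp.lsum_single]; rfl
  have hE : ∀ c t, E c t = ε t * c t := by
    intro c t
    induction c using Finsupp.induction_linear with
    | zero => simp
    | add f g hf hg => rw [map_add, Finsupp.add_apply, hf, hg, Finsupp.add_apply, mul_add]
    | single s r =>
      rw [hEs]
      by_cases h : s = t
      · subst h; simp
      · simp [Finsupp.single_eq_of_ne (Ne.symm h)]
  have hLE : L.comp E = L := by
    ext t : 2
    have : ε t • k t = k t := by
      ext1
      simp only [k, Submodule.coe_smul, smul_smul, hε]
    simpa [L, hEs] using this
  have hLsurj : Function.Surjective L := by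
    rw [← LinearMap.range_eq_top, Finsupp.range_linearCombination]
    refine Submodule.map_injective_of_injective K.injective_subtype ?_
    rw [Submodule.map_span, ← Set.range_comp, Submodule.map_top, Submodule.range_subtype]
    exact hspan
  have hker : LinearMap.ker L ≤ LinearMap.ker E := by
    intro c hc
    rw [LinearMap.mem_ker] at hc ⊢
    ext1 t
    rw [hE]
    refine ext_on_nat fun i => ?_
    -- The relation `L c = 0`, evaluated in the fibre at `i`.
    let d : T →₀ ℤ := fibre (i : OnePoint ℕ) (E c)
    have hd : ∀ t, d t = ε t i * c t i := fun t => by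
      simp [d, fibre_apply, hE]
    have hd0 : d = 0 := by
      refine linearIndepOn_iff.1 (hli i) d ?_ ?_
      · rw [Finsupp.mem_supported]
        intro s hs h0
        rw [Finset.mem_coe, Finsupp.mem_support_iff, hd, h0, zero_mul] at hs
        exact hs rfl
      · have h1 : ∀ c : T →₀ CX, Finsupp.linearCombination ℤ w (fibre (i : OnePoint ℕ) (E c)) =
            fibre (i : OnePoint ℕ) (L c : J →₀ CX) := by
          intro c
          induction c using Finsupp.induction_linear with
          | zero => simp
          | add f g hf hg => simp only [map_add, hf, hg, Submodule.coe_add]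
          | single s r =>
            rw [hEs, fibre_single, Finsupp.linearCombination_single,
              Finsupp.linearCombination_single, Submodule.coe_smul, fibre_smul, fibre_smul,
              fibre_constSec, smul_smul, LocallyConstant.mul_apply, mul_comm]
        rw [h1, hc]
        simp
    have := DFunLike.congr_fun hd0 t
    rw [hd] at this
    simpa using this
  have hP : Module.Projective CX (T →₀ CX) := inferInstance
  exact @projective_of_ker_le CX (T →₀ CX) K _ _ _ _ _ hP L E hLsurj hLE hker

end FreeModule

/-- Let `K` be a submodule of a free module of countable rank whose group of germs at `∞` is pure in
`J →₀ ℤ`. Then `K` is projective. -/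
theorem projective_of_pure {J : Type u} [Countable J] (K : Submodule CX (J →₀ CX))
    (hpure : ∀ k : ℤ, k ≠ 0 → ∀ v : J →₀ ℤ, (∃ m, tailFn m • constSec (k • v) ∈ K) →
      ∃ m, tailFn m • constSec v ∈ K) :
    Module.Projective CX K := by
  classical
  have hmono : ∀ {m m' : ℕ} {x : J →₀ CX}, m ≤ m' → tailFn m • x ∈ K → tailFn m' • x ∈ K := by
    intro m m' x h hx
    rw [← tailFn_mul_of_le h, mul_smul]
    exact K.smul_mem _ hx
  have hzsmul : ∀ (c : ℤ) {x : J →₀ CX}, x ∈ K → c • x ∈ K := fun c x hx => zsmul_mem hx c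
  -- The germs at `∞` of elements of `K`.
  let Kinf : Submodule ℤ (J →₀ ℤ) :=
    { carrier := {v | ∃ m, tailFn m • constSec v ∈ K}
      add_mem' := by
        rintro v v' ⟨m, h⟩ ⟨m', h'⟩
        refine ⟨max m m', ?_⟩
        rw [map_add, smul_add]
        exact K.add_mem (hmono (le_max_left _ _) h) (hmono (le_max_right _ _) h')
      zero_mem' := ⟨0, by simp⟩
      smul_mem' := by
        rintro c v ⟨m, h⟩
        refine ⟨m, ?_⟩
        rw [_root_.map_smul, smul_comm]
        exact hzsmul c h }
  -- The fibre of `K` at `i`.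
  let Kfin (i : ℕ) : Submodule ℤ (J →₀ ℤ) :=
    { carrier := {v | deltaFn i • constSec v ∈ K}
      add_mem' := by
        intro v v' h h'
        rw [Set.mem_ofPred_eq, map_add, smul_add]
        exact K.add_mem h h'
      zero_mem' := by simp
      smul_mem' := by
        intro c v h
        rw [Set.mem_ofPred_eq, _root_.map_smul, smul_comm]
        exact hzsmul c h }
  have hfree : Module.Free ℤ Kinf := free_submodule_int Kinf
  obtain ⟨⟨ι, e⟩⟩ := Module.Free.exists_basis (R := ℤ) (M := Kinf)
  have hι : Countable ι := e.injective.countable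
  obtain ⟨enc, henc⟩ := Countable.exists_injective_nat ι
  have hthr : ∀ n, ∃ m, tailFn m • constSec (e n : J →₀ ℤ) ∈ K := fun n => (e n).2
  choose thr hthr using hthr
  -- The element `e n` of `Kinf` gives `tailFn (m n) • e n ∈ K`. Taking `m n ≥ enc n` makes
  -- each `{n | m n ≤ i}` finite.
  let m : ι → ℕ := fun n => max (thr n) (enc n)
  have hm : ∀ n, tailFn (m n) • constSec (e n : J →₀ ℤ) ∈ K :=
    fun n => hmono (le_max_left _ _) (hthr n)
  have hfinite : ∀ i, Finite {n // m n ≤ i} := by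
    intro i
    refine Finite.of_injective (β := Fin (i + 1))
      (fun n => ⟨enc n, Nat.lt_succ_of_le ((le_max_right _ _).trans n.2)⟩) ?_
    intro a b hab
    exact Subtype.ext (henc (by simpa using hab))
  have he : LinearIndependent ℤ (fun n => (e n : J →₀ ℤ)) :=
    e.linearIndependent.map' Kinf.subtype (Submodule.ker_subtype _)
  have hdec : ∀ i : ℕ, ∃ (τ : Type u) (b : τ → J →₀ ℤ),
      LinearIndependent ℤ (Sum.elim (fun n : {n // m n ≤ i} => (e n : J →₀ ℤ)) b) ∧
      Submodule.span ℤ (Set.range (Sum.elim (fun n : {n // m n ≤ i} => (e n : J →₀ ℤ)) b))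
        = Kfin i := by
    intro i
    -- Purity: the span of part of the basis `e` is pure in `Kinf`, and `Kinf` is pure in `J →₀ ℤ`.
    refine exists_complement_basis (Kfin i) _ (he.comp _ Subtype.val_injective) ?_ ?_
    · intro n
      change deltaFn i • constSec _ ∈ K
      rw [← deltaFn_mul_tailFn n.2, mul_smul]
      exact K.smul_mem _ (hm n)
    · intro k hk v hv
      have hspan : ∀ u : Kinf, (u : J →₀ ℤ) ∈ Submodule.span ℤ
          (Set.range fun n : {n // m n ≤ i} => (e n : J →₀ ℤ)) ↔
          ∀ n, ¬ m n ≤ i → e.repr u n = 0 := by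
        intro u
        have h1 : (Set.range fun n : {n // m n ≤ i} => (e n : J →₀ ℤ)) =
            Kinf.subtype '' (e '' {n | m n ≤ i}) := by
          ext y; simp
        have h2 : (u : J →₀ ℤ) ∈ (Submodule.span ℤ (e '' {n | m n ≤ i})).map Kinf.subtype ↔
            u ∈ Submodule.span ℤ (e '' {n | m n ≤ i}) :=
          ⟨fun ⟨y, hy, h⟩ => (Subtype.ext h : y = u) ▸ hy, fun h => ⟨u, h, rfl⟩⟩
        rw [h1, ← Submodule.map_span, h2, e.mem_span_image]
        constructor
        · intro h n hn
          by_contra h0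
          exact hn (h (Finsupp.mem_support_iff.2 h0))
        · intro h n hn
          by_contra h0
          exact (Finsupp.mem_support_iff.1 hn) (h n h0)
      have hle : Submodule.span ℤ (Set.range fun n : {n // m n ≤ i} => (e n : J →₀ ℤ)) ≤ Kinf := by
        rw [Submodule.span_le]
        rintro _ ⟨n, rfl⟩
        exact (e n).2
      have hvK : v ∈ Kinf := hpure k hk v (hle hv)
      refine (hspan ⟨v, hvK⟩).2 fun n hn => ?_
      have h2 := (hspan (k • ⟨v, hvK⟩)).1 hv n hn
      rw [_root_.map_smul, Finsupp.smul_apply, smul_eq_mul] at h2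
      exact (mul_eq_zero.1 h2).resolve_left hk
  choose τ b hbli hbspan using hdec
  let ε : (ι ⊕ Σ i, τ i) → CX := Sum.elim (fun n => tailFn (m n)) (fun t => deltaFn t.1)
  let w : (ι ⊕ Σ i, τ i) → (J →₀ ℤ) := Sum.elim (fun n => e n) (fun t => b t.1 t.2)
  refine projective_of_idempotent_basis K ε w ?_ (le_antisymm ?_ ?_) ?_
  · rintro (n | t)
    · exact tailFn_mul_of_le le_rfl
    · exact deltaFn_mul_self _
  · rw [Submodule.span_le]
    rintro _ ⟨n | ⟨i, t⟩, rfl⟩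
    · exact hm n
    · have : b i t ∈ Kfin i := by
        rw [← hbspan]
        exact Submodule.subset_span ⟨Sum.inr t, rfl⟩
      exact this
  · set W := Submodule.span CX (Set.range fun t => ε t • constSec (w t)) with hW
    have hWz : ∀ (c : ℤ) {x : J →₀ CX}, x ∈ W → c • x ∈ W := fun c x hx => zsmul_mem hx c
    have hgen : ∀ t, ε t • constSec (w t) ∈ W := fun t => Submodule.subset_span ⟨t, rfl⟩
    have hWmono : ∀ {m m' : ℕ} {x : J →₀ CX}, m ≤ m' → tailFn m • x ∈ W → tailFn m' • x ∈ W := by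
      intro m m' x h hx
      rw [← tailFn_mul_of_le h, mul_smul]
      exact W.smul_mem _ hx
    have hWinf : ∀ v ∈ Kinf, ∃ m, tailFn m • constSec v ∈ W := by
      intro v hv
      have hv' : v ∈ Submodule.span ℤ (Set.range fun n => (e n : J →₀ ℤ)) := by
        have h1 : (Set.range fun n => (e n : J →₀ ℤ)) = Kinf.subtype '' (Set.range e) := by
          rw [← Set.range_comp]; rfl
        rw [h1, ← Submodule.map_span, e.span_eq, Submodule.map_top, Submodule.range_subtype]
        exact hv
      clear hv
      induction hv' using Submodule.span_induction with
      | mem x hx =>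
        obtain ⟨n, rfl⟩ := hx
        exact ⟨m n, hgen (Sum.inl n)⟩
      | zero => exact ⟨0, by simp⟩
      | add x y hx hy ihx ihy =>
        obtain ⟨m₁, h₁⟩ := ihx
        obtain ⟨m₂, h₂⟩ := ihy
        refine ⟨max m₁ m₂, ?_⟩
        rw [map_add, smul_add]
        exact W.add_mem (hWmono (le_max_left _ _) h₁) (hWmono (le_max_right _ _) h₂)
      | smul c x hx ih =>
        obtain ⟨m₁, h₁⟩ := ih
        refine ⟨m₁, ?_⟩
        rw [_root_.map_smul, smul_comm]
        exact hWz c h₁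
    have hWfin : ∀ i, ∀ v ∈ Kfin i, deltaFn i • constSec v ∈ W := by
      intro i v hv
      rw [← hbspan] at hv
      induction hv using Submodule.span_induction with
      | mem x hx =>
        obtain ⟨n | t, rfl⟩ := hx
        · rw [← deltaFn_mul_tailFn n.2, mul_smul]
          exact W.smul_mem _ (hgen (Sum.inl n))
        · exact hgen (Sum.inr ⟨i, t⟩)
      | zero => simp
      | add x y hx hy ihx ihy =>
        rw [map_add, smul_add]
        exact W.add_mem ihx ihy
      | smul c x hx ih =>
        rw [_root_.map_smul, smul_comm]
        exact hWz c ih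
    intro x hx
    obtain ⟨m₀, hm₀⟩ := exists_tailFn_smul_eq x
    have hinf : fibre ∞ x ∈ Kinf := ⟨m₀, hm₀ m₀ le_rfl ▸ K.smul_mem _ hx⟩
    obtain ⟨m₁, hm₁⟩ := hWinf _ hinf
    rw [eq_tail_add_sum (max m₀ m₁) x]
    refine W.add_mem ?_ (W.sum_mem fun i _ => ?_)
    · rw [hm₀ _ (le_max_left _ _)]
      exact hWmono (le_max_right _ _) hm₁
    · rw [deltaFn_smul_eq]
      refine hWfin i _ ?_
      change deltaFn i • constSec _ ∈ K
      rw [← deltaFn_smul_eq]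
      exact K.smul_mem _ hx
  · intro i
    -- The members of the family that survive in the fibre at `i` form part of a basis of `Kfin i`.
    have hcase : ∀ t : {t | ε t (i : OnePoint ℕ) ≠ 0}, ∃ s : {n // m n ≤ i} ⊕ τ i,
        (t : ι ⊕ Σ i, τ i) = Sum.map Subtype.val (Sigma.mk i) s := by
      rintro ⟨n | ⟨j, t⟩, h⟩
      · have hn : m n ≤ i := by
          by_contra hn
          exact h (by simp [ε, tailFn_coe, hn])
        exact ⟨Sum.inl ⟨n, hn⟩, rfl⟩
      · have hj : i = j := by
          by_contra hj
          exact h (by simp [ε, deltaFn_coe, hj])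
        subst hj
        exact ⟨Sum.inr t, rfl⟩
    choose f hf using hcase
    have hinj : Function.Injective f := fun s t hst => Subtype.ext (by rw [hf, hf, hst])
    have h := (hbli i).comp f hinj
    have hw : (fun t : {t | ε t (i : OnePoint ℕ) ≠ 0} => w t) =
        Sum.elim (fun n : {n // m n ≤ i} => (e n : J →₀ ℤ)) (b i) ∘ f := by
      funext t
      rw [hf t, Function.comp_apply]
      rcases f t with n | s <;> rfl
    change LinearIndependent ℤ (fun t : {t | ε t (i : OnePoint ℕ) ≠ 0} => w t)
    rw [hw]
    exact h

/-! ### Projective dimension -/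

/-- Let `M` be a countably generated `C(ℕ∪{∞},ℤ)`-module and let `N` be the submodule
generated by `{δ_n • m : n ∈ ℕ, m ∈ M}`. If `M/N` is torsion-free as an abelian group,
then `M` has projective dimension at most `1` as a `C(ℕ∪{∞},ℤ)`-module. -/
theorem projectiveDimension_le_one_of_torsionFree_quotient
    (M : Type u) [AddCommGroup M] [Module (LocallyConstant (OnePoint ℕ) ℤ) M]
    (hcg : ∃ S : Set M, S.Countable ∧ Submodule.span (LocallyConstant (OnePoint ℕ) ℤ) S = ⊤)
    (N : Submodule (LocallyConstant (OnePoint ℕ) ℤ) M)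
    (hN : N = Submodule.span (LocallyConstant (OnePoint ℕ) ℤ)
      {y : M | ∃ (n : ℕ) (m : M), y = deltaFn n • m})
    (htf : ∀ k : ℤ, k ≠ 0 → ∀ x : M ⧸ N, k • x = 0 → x = 0) :
    ∃ (P₀ P₁ : Type u) (_ : AddCommGroup P₀) (_ : AddCommGroup P₁)
      (_ : Module (LocallyConstant (OnePoint ℕ) ℤ) P₀)
      (_ : Module (LocallyConstant (OnePoint ℕ) ℤ) P₁),
      Module.Projective (LocallyConstant (OnePoint ℕ) ℤ) P₀ ∧
      Module.Projective (LocallyConstant (OnePoint ℕ) ℤ) P₁ ∧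
      ∃ (π : P₀ →ₗ[LocallyConstant (OnePoint ℕ) ℤ] M)
        (j : P₁ →ₗ[LocallyConstant (OnePoint ℕ) ℤ] P₀),
        Function.Surjective π ∧ Function.Injective j ∧
        LinearMap.range j = LinearMap.ker π := by
  obtain ⟨S, hS, hspan⟩ := hcg
  have : Countable S := hS.to_subtype
  let π : (S →₀ CX) →ₗ[CX] M := Finsupp.linearCombination CX (Subtype.val : S → M)
  have hπ : Function.Surjective π := by
    rw [← LinearMap.range_eq_top, Finsupp.range_linearCombination, Subtype.range_coe, hspan]
  -- Elements of `N` vanish near `∞`.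
  have hN_tail : ∀ y ∈ N, ∃ m, tailFn m • y = 0 := by
    intro y hy
    rw [hN] at hy
    induction hy using Submodule.span_induction with
    | mem y hy =>
      obtain ⟨n, z, rfl⟩ := hy
      exact ⟨n + 1, by rw [← mul_smul, tailFn_mul_deltaFn (Nat.lt_succ_self n), zero_smul]⟩
    | zero => exact ⟨0, smul_zero _⟩
    | add x y _ _ ihx ihy =>
      obtain ⟨a, ha⟩ := ihx
      obtain ⟨b, hb⟩ := ihy
      refine ⟨max a b, ?_⟩
      have hx : tailFn (max a b) • x = 0 := by
        rw [← tailFn_mul_of_le (le_max_left a b), mul_smul, ha, smul_zero]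
      have hy : tailFn (max a b) • y = 0 := by
        rw [← tailFn_mul_of_le (le_max_right a b), mul_smul, hb, smul_zero]
      rw [smul_add, hx, hy, add_zero]
    | smul r x _ ih =>
      obtain ⟨a, ha⟩ := ih
      exact ⟨a, by rw [smul_comm, ha, smul_zero]⟩
  have hN_of_tail : ∀ (m : ℕ) (y : M), tailFn m • y = 0 → y ∈ N := by
    intro m y hy
    rw [eq_tail_add_sum m y, hy, zero_add, hN]
    exact Submodule.sum_mem _ fun i _ => Submodule.subset_span ⟨i, y, rfl⟩
  have hK : Module.Projective CX (LinearMap.ker π) := by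
    refine projective_of_pure _ fun k hk v hv => ?_
    obtain ⟨m, hm⟩ := hv
    rw [LinearMap.mem_ker, _root_.map_smul] at hm
    have h1 : π (constSec (k • v)) ∈ N := hN_of_tail m _ hm
    have h2 : k • π (constSec v) ∈ N := by
      rw [_root_.map_smul, map_zsmul] at h1
      exact h1
    have h3 : π (constSec v) ∈ N := by
      rw [← Submodule.Quotient.mk_eq_zero]
      refine htf k hk _ ?_
      have h4 := (Submodule.Quotient.mk_eq_zero N).2 h2
      rw [← h4]
      exact (map_zsmul N.mkQ k (π (constSec v))).symm
    obtain ⟨m', hm'⟩ := hN_tail _ h3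
    exact ⟨m', by rw [LinearMap.mem_ker, _root_.map_smul, hm']⟩
  have hP : Module.Projective CX (S →₀ CX) := inferInstance
  exact ⟨S →₀ CX, LinearMap.ker π, inferInstance, inferInstance, inferInstance, inferInstance,
    hP, hK, π, (LinearMap.ker π).subtype, hπ, (LinearMap.ker π).injective_subtype,
    Submodule.range_subtype _⟩
end
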